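/- arXiv:2409.03233 — 15 statements merged into one kernel-verified Lean document; each statement's English description precedes it below -/
import Mathlib

section
/- If G is an r-regular finite simple graph where r ≥ 3 is an odd integer, then G contains a spanning subgraph H such that 2 ≤ d_H(v) ≤ 3 for every vertex v and no two vertices of degree 3 in H are adjacent in H. -/
/-!
Deleting an edge between two vertices of degree `d + 1` keeps all degrees in `{d, d + 1}`, so an
inclusion-minimal spanning subgraph with degrees in `{d, d + 1}` is automatically reduced
(`exists_reduced_subgraph`). It remains to find a spanning subgraph with degrees in `{2, 3}`, and
for this one descends from `G` itself, following Thomassen: if `H` has degrees in `{d + 1, d + 2}`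
and the set `A` of vertices of degree `d + 2` is independent, then Hall's theorem gives a matching
of `H` that covers `A`, each edge of which has only one end in `A`; deleting it leaves degrees in
`{d, d + 1}` (`exists_subgraph_degrees_pred`).
-/

open SimpleGraph

/-- `S ⊆ V(G)` is a `p`-independent set: the subgraph of `G` induced by `S` has maximum
degree at most `p`, i.e. every vertex of `S` has at most `p` neighbors inside `S`. -/
def SimpleGraph.IsPIndepSet {V : Type*} (G : SimpleGraph V) (p : ℕ) (S : Set V) : Prop :=
  ∀ v ∈ S, (S ∩ G.neighborSet v).ncard ≤ p

/-- The `p`-independence number of `G`: the maximum cardinality of a `p`-independent set. -/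
noncomputable def SimpleGraph.pIndepNum {V : Type*} (G : SimpleGraph V) (p : ℕ) : ℕ :=
  sSup {n : ℕ | ∃ S : Set V, G.IsPIndepSet p S ∧ S.ncard = n}

/-- `G` is `r`-regular: every vertex has exactly `r` neighbors. -/
def SimpleGraph.IsRegularDeg {V : Type*} (G : SimpleGraph V) (r : ℕ) : Prop :=
  ∀ v : V, (G.neighborSet v).ncard = r

/-- Every vertex of `H` has degree `d` or `d + 1`. -/
def AlmostRegular {V : Type*} (H : SimpleGraph V) (d : ℕ) : Prop :=
  ∀ v : V, d ≤ (H.neighborSet v).ncard ∧ (H.neighborSet v).ncard ≤ d + 1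

/-- A subgraph that is minimal among those with degrees in `{d, d + 1}` has no edge between two
vertices of degree `d + 1`. -/
lemma exists_reduced_subgraph {V : Type*} [Finite V] (G : SimpleGraph V) (d : ℕ)
    (hG : AlmostRegular G d) :
    ∃ H : SimpleGraph V, H ≤ G ∧ AlmostRegular H d ∧
      ∀ u v : V, H.Adj u v →
        ¬ ((H.neighborSet u).ncard = d + 1 ∧ (H.neighborSet v).ncard = d + 1) := by
  obtain ⟨H, hHG, hmin⟩ := exists_minimal_le_of_wellFoundedLT
    (fun H : SimpleGraph V => AlmostRegular H d) G hG
  refine ⟨H, hHG, hmin.prop, ?_⟩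
  rintro u v huv ⟨hu, hv⟩
  have hle : H.deleteEdges {s(u, v)} ≤ H := H.deleteEdges_le _
  have hNu : (H.deleteEdges {s(u, v)}).neighborSet u = H.neighborSet u \ {v} := by
    ext w
    have := huv.ne
    simp only [mem_neighborSet, deleteEdges_adj, Set.mem_singleton_iff, Sym2.eq_iff, Set.mem_sdiff]
    grind
  have hNv : (H.deleteEdges {s(u, v)}).neighborSet v = H.neighborSet v \ {u} := by
    ext w
    have := huv.ne
    simp only [mem_neighborSet, deleteEdges_adj, Set.mem_singleton_iff, Sym2.eq_iff, Set.mem_sdiff]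
    grind
  have hNw : ∀ w, w ≠ u → w ≠ v →
      (H.deleteEdges {s(u, v)}).neighborSet w = H.neighborSet w := by
    intro w hwu hwv
    ext x
    simp only [mem_neighborSet, deleteEdges_adj, Set.mem_singleton_iff, Sym2.eq_iff]
    grind
  have hdel : AlmostRegular (H.deleteEdges {s(u, v)}) d := by
    intro w
    by_cases hwu : w = u
    · subst hwu
      rw [hNu, Set.ncard_sdiff_singleton_of_mem ((H.mem_neighborSet _ _).2 huv), hu]
      omega
    by_cases hwv : w = v
    · subst hwv
      rw [hNv, Set.ncard_sdiff_singleton_of_mem ((H.mem_neighborSet _ _).2 huv.symm), hv]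
      omega
    rw [hNw w hwu hwv]
    exact hmin.prop w
  have hadj := hmin.le_of_le hdel hle huv
  simp at hadj

/-- In a graph of maximum degree at most `m`, where `0 < m`, the vertices of degree exactly `m` can
be assigned distinct neighbours: double counting edges gives Hall's condition. -/
lemma exists_injective_neighbor {V : Type*} [Fintype V] (H : SimpleGraph V) (m : ℕ) (hm : 0 < m)
    (hH : ∀ v : V, (H.neighborSet v).ncard ≤ m) :
    ∃ f : {v : V // (H.neighborSet v).ncard = m} → V,
      Function.Injective f ∧ ∀ a, H.Adj a.1 (f a) := by
  classical
  have hcard : ∀ v, (H.neighborFinset v).card = (H.neighborSet v).ncard := by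
    intro v
    rw [← Set.ncard_coe_finset, coe_neighborFinset]
  obtain ⟨f, hf, hfN⟩ := (Finset.all_card_le_biUnion_card_iff_exists_injective
    (fun a : {v : V // (H.neighborSet v).ncard = m} => H.neighborFinset a)).1 (by
      intro s
      refine Nat.le_of_mul_le_mul_right
        (Finset.card_mul_le_card_mul (fun a b => H.Adj a.1 b) (m := m) (n := m) ?_ ?_) hm
      · intro a ha
        refine (a.2.symm.trans (hcard a).symm).le.trans ?_
        apply Finset.card_le_card
        intro w hw
        rw [Finset.mem_bipartiteAbove, Finset.mem_biUnion]
        exact ⟨⟨a, ha, hw⟩, by simpa using hw⟩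
      · intro b _
        refine le_trans ?_ (hH b)
        rw [← hcard, ← Finset.card_map (Function.Embedding.subtype _)]
        apply Finset.card_le_card
        intro w hw
        obtain ⟨a, ha, rfl⟩ := Finset.mem_map.1 hw
        rw [Finset.mem_bipartiteBelow] at ha
        simpa using ha.2.symm)
  exact ⟨f, hf, fun a => by simpa using hfN a⟩

/-- Thomassen's descent step: pass to a reduced subgraph and delete a matching covering the
vertices of larger degree. -/
lemma exists_subgraph_degrees_pred {V : Type*} [Fintype V] (G : SimpleGraph V) (d : ℕ)
    (hG : AlmostRegular G (d + 1)) :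
    ∃ H : SimpleGraph V, H ≤ G ∧ AlmostRegular H d := by
  obtain ⟨H, hHG, hH, hred⟩ := exists_reduced_subgraph G (d + 1) hG
  obtain ⟨f, hf, hfadj⟩ := exists_injective_neighbor H (d + 1 + 1) (by omega) (fun v => (hH v).2)
  -- `A` is independent, so the matched partner of a vertex of `A` lies outside `A`.
  have hfA : ∀ a, (H.neighborSet (f a)).ncard ≠ d + 1 + 1 :=
    fun a h => hred _ _ (hfadj a) ⟨a.2, h⟩
  set K := H.deleteEdges (Set.range fun a => s(a.1, f a)) with hK
  have hKadj : ∀ u v, K.Adj u v ↔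
      H.Adj u v ∧ ∀ a, ¬ ((a.1 = u ∧ f a = v) ∨ (a.1 = v ∧ f a = u)) := by
    intro u v
    simp only [hK, deleteEdges_adj, Set.mem_range, Sym2.eq_iff, not_exists]
  refine ⟨K, (H.deleteEdges_le _).trans hHG, ?_⟩
  intro v
  have hv := hH v
  by_cases hvA : (H.neighborSet v).ncard = d + 1 + 1
  · have hN : K.neighborSet v = H.neighborSet v \ {f ⟨v, hvA⟩} := by
      ext w
      simp only [mem_neighborSet, hKadj, Set.mem_sdiff, Set.mem_singleton_iff]
      refine and_congr_right fun _ => ⟨fun h hw => h ⟨v, hvA⟩ (Or.inl ⟨rfl, hw.symm⟩), ?_⟩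
      rintro h a (⟨rfl, rfl⟩ | ⟨-, rfl⟩)
      · exact h rfl
      · exact hfA a hvA
    rw [hN, Set.ncard_sdiff_singleton_of_mem ((H.mem_neighborSet _ _).2 (hfadj ⟨v, hvA⟩)), hvA]
    omega
  by_cases hvf : ∃ a, f a = v
  · obtain ⟨b, rfl⟩ := hvf
    have hN : K.neighborSet (f b) = H.neighborSet (f b) \ {b.1} := by
      ext w
      simp only [mem_neighborSet, hKadj, Set.mem_sdiff, Set.mem_singleton_iff]
      refine and_congr_right fun _ => ⟨fun h hw => h b (Or.inr ⟨hw.symm, rfl⟩), ?_⟩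
      rintro h a (⟨ha, -⟩ | ⟨rfl, ha⟩)
      · exact hvA (ha ▸ a.2)
      · exact h (congrArg Subtype.val (hf ha))
    rw [hN, Set.ncard_sdiff_singleton_of_mem ((H.mem_neighborSet _ _).2 (hfadj b).symm)]
    omega
  · have hN : K.neighborSet v = H.neighborSet v := by
      ext w
      simp only [mem_neighborSet, hKadj, and_iff_left_iff_imp]
      rintro - a (⟨rfl, -⟩ | ⟨-, ha⟩)
      · exact hvA a.2
      · exact hvf ⟨a, ha⟩
    rw [hN]
    omega

lemma exists_subgraph_degrees_le {V : Type*} [Fintype V] (G : SimpleGraph V) (d n : ℕ)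
    (hG : AlmostRegular G (d + n)) :
    ∃ H : SimpleGraph V, H ≤ G ∧ AlmostRegular H d := by
  induction n generalizing G with
  | zero => exact ⟨G, le_rfl, hG⟩
  | succ n ih =>
    obtain ⟨H, hHG, hH⟩ := exists_subgraph_degrees_pred G (d + n) hG
    obtain ⟨K, hKH, hK⟩ := ih H hH
    exact ⟨K, hKH.trans hHG, hK⟩

/-- every `r`-regular graph with `r ≥ 3` odd contains a reduced `[2,3]`-factor:
a spanning subgraph `H` with `2 ≤ d_H(v) ≤ 3` for all `v` and no two vertices of degree `3`
adjacent in `H`. -/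
theorem odd_regular_has_reduced_23_factor {V : Type*} [Fintype V] (G : SimpleGraph V)
    (r : ℕ) (hr : 3 ≤ r) (hodd : Odd r) (hreg : G.IsRegularDeg r) :
    ∃ H : SimpleGraph V, H ≤ G ∧
      (∀ v : V, 2 ≤ (H.neighborSet v).ncard ∧ (H.neighborSet v).ncard ≤ 3) ∧
      (∀ u v : V, H.Adj u v →
        ¬ ((H.neighborSet u).ncard = 3 ∧ (H.neighborSet v).ncard = 3)) := by
  have hG : AlmostRegular G (2 + (r - 3)) := by
    intro v
    rw [hreg v]
    omega
  obtain ⟨K, hKG, hK⟩ := exists_subgraph_degrees_le G 2 (r - 3) hG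
  obtain ⟨H, hHK, hH, hred⟩ := exists_reduced_subgraph K 2 hK
  exact ⟨H, hHK.trans hKG, hH, hred⟩
end

section
/- If G is an r-regular finite simple graph of order n and p is an integer with 0 ≤ p ≤ r, then α_p(G)·(2r - p) ≤ n·r. -/
/-!
Double counting of the edges between a `p`-independent set `S` and its complement.
Each vertex of `S` has at most `p` of its `r` neighbors in `S`, hence sends at least `r - p` edges
out of `S`; each vertex outside `S` receives at most `r` of them. So
`|S| (r - p) ≤ (n - |S|) r`, which rearranges to `|S| (2r - p) ≤ n r`.
-/

open SimpleGraph

/-- The bound for an arbitrary `p`-independent set, by counting the edges leaving it. -/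
theorem SimpleGraph.IsPIndepSet.ncard_mul_le {V : Type*} [Fintype V] {G : SimpleGraph V}
    {r p : ℕ} {S : Set V} (hS : G.IsPIndepSet p S) (hreg : G.IsRegularDeg r) (hp : p ≤ r) :
    S.ncard * (2 * r - p) ≤ Fintype.card V * r := by
  classical
  have key : S.toFinset.card * (r - p) ≤ S.toFinsetᶜ.card * r := by
    refine Finset.card_mul_le_card_mul G.Adj (fun v hv => ?_) (fun w _ => ?_)
    · have hout : (Finset.bipartiteAbove G.Adj S.toFinsetᶜ v : Set V) = G.neighborSet v \ S := by
        ext w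
        simp [Finset.bipartiteAbove, and_comm]
      have hsplit := Set.ncard_inter_add_ncard_sdiff_eq_ncard (G.neighborSet v) S
      have hin := hS v (Set.mem_toFinset.mp hv)
      rw [← Set.ncard_coe_finset, hout]
      rw [Set.inter_comm, hreg v] at hsplit
      omega
    · rw [← Set.ncard_coe_finset, ← hreg w]
      refine Set.ncard_le_ncard (fun v hv => ?_)
      simp only [Finset.bipartiteBelow, Finset.coe_filter, Set.mem_ofPred_eq] at hv
      exact hv.2.symm
  have hcard := Finset.card_add_card_compl S.toFinset
  rw [Set.ncard_eq_toFinset_card', ← hcard, show 2 * r - p = r + (r - p) by omega]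
  linarith [mul_add S.toFinset.card r (r - p), add_mul S.toFinset.card S.toFinsetᶜ.card r]

/-- if `G` is `r`-regular of order `n` and `0 ≤ p ≤ r`, then
`α_p(G) · (2r - p) ≤ n · r`. -/
theorem pIndepNum_mul_le {V : Type*} [Fintype V] (G : SimpleGraph V) (r p : ℕ)
    (hreg : G.IsRegularDeg r) (hp : p ≤ r) :
    G.pIndepNum p * (2 * r - p) ≤ Fintype.card V * r := by
  -- The supremum is attained, as the cardinalities are bounded by `|V|` and `∅` is `p`-independent.
  obtain ⟨S, hS, hcard⟩ : G.pIndepNum p ∈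
      {n : ℕ | ∃ S : Set V, G.IsPIndepSet p S ∧ S.ncard = n} := by
    refine Nat.sSup_mem ⟨0, ∅, fun v hv => hv.elim, Set.ncard_empty V⟩ ⟨Fintype.card V, ?_⟩
    rintro _ ⟨S, -, rfl⟩
    exact (Set.ncard_le_card S).trans_eq Nat.card_eq_fintype_card
  rw [← hcard]
  exact hS.ncard_mul_le hreg hp
end

section
/- If G is an r-regular finite simple graph of order n and p is an integer with 0 ≤ p < r, then α_p(G)·(r + 1) ≤ n·r. -/
/-!
Let `S` be `p`-independent with `p < r`. A vertex of `S` has at most `p` of its `r` neighbors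
inside `S`, hence at least one outside; a vertex outside `S` has at most `r` neighbors in `S`.
Choosing for each vertex of `S` a neighbor outside `S` gives a map `S → Sᶜ` whose fibers have
size at most `r`, so `|S| ≤ r (n - |S|)`, which rearranges to the bound for `S`
(`SimpleGraph.IsPIndepSet.ncard_mul_succ_le`). The supremum defining the `p`-independence number
is attained by such a set.
-/

open SimpleGraph

lemma SimpleGraph.IsPIndepSet.exists_adj_notMem {V : Type*} [Finite V] {G : SimpleGraph V}
    {r p : ℕ} {S : Set V} (hS : G.IsPIndepSet p S) (hreg : G.IsRegularDeg r) (hp : p < r)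
    {v : V} (hv : v ∈ S) : ∃ w, G.Adj v w ∧ w ∉ S := by
  by_contra! h
  have hsub : G.neighborSet v ⊆ S := fun w hw => h w hw
  have h1 := hS v hv
  rw [Set.inter_eq_right.mpr hsub, hreg v] at h1
  omega

lemma SimpleGraph.IsPIndepSet.ncard_mul_succ_le {V : Type*} [Fintype V] {G : SimpleGraph V}
    {r p : ℕ} {S : Set V} (hS : G.IsPIndepSet p S) (hreg : G.IsRegularDeg r) (hp : p < r) :
    S.ncard * (r + 1) ≤ Fintype.card V * r := by
  classical
  have hex : ∀ v, ∃ w, v ∈ S → G.Adj v w ∧ w ∉ S := fun v => by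
    by_cases hv : v ∈ S
    · obtain ⟨w, hw⟩ := hS.exists_adj_notMem hreg hp hv
      exact ⟨w, fun _ => hw⟩
    · exact ⟨v, fun h => absurd h hv⟩
  choose f hf using hex
  have hle : S.toFinset.card ≤ r * (S.toFinset)ᶜ.card := by
    refine Finset.card_le_mul_card_image_of_maps_to (f := f) ?_ r ?_
    · intro v hv
      simpa using (hf v (by simpa using hv)).2
    · intro w _
      rw [← hreg w, ← Set.ncard_coe_finset]
      refine Set.ncard_le_ncard ?_ (Set.toFinite _)
      intro v hv
      simp only [Finset.coe_filter, Set.mem_toFinset, Set.mem_ofPred_eq] at hv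
      obtain ⟨hvS, rfl⟩ := hv
      exact (hf v hvS).1.symm
  have hcard := Finset.card_add_card_compl S.toFinset
  rw [Set.ncard_eq_toFinset_card', ← hcard]
  linarith [mul_comm r (S.toFinset)ᶜ.card, mul_comm r S.toFinset.card,
    add_mul S.toFinset.card (S.toFinset)ᶜ.card r, mul_add S.toFinset.card r 1]

/-- if `G` is `r`-regular of order `n` and `0 ≤ p < r`, then
`α_p(G) · (r + 1) ≤ n · r`. -/
theorem pIndepNum_mul_succ_le {V : Type*} [Fintype V] (G : SimpleGraph V) (r p : ℕ)
    (hreg : G.IsRegularDeg r) (hp : p < r) :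
    G.pIndepNum p * (r + 1) ≤ Fintype.card V * r := by
  -- The supremum is over a nonempty bounded set of naturals, so a `p`-independent set attains it.
  have hmem : G.pIndepNum p ∈ {n : ℕ | ∃ S : Set V, G.IsPIndepSet p S ∧ S.ncard = n} := by
    refine Nat.sSup_mem ⟨0, ∅, fun v hv => absurd hv (Set.notMem_empty v), Set.ncard_empty V⟩
      ⟨Fintype.card V, ?_⟩
    rintro _ ⟨S, -, rfl⟩
    rw [← Nat.card_eq_fintype_card]
    exact Set.ncard_le_card S
  obtain ⟨S, hS, hn⟩ := hmem
  rw [← hn]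
  exact hS.ncard_mul_succ_le hreg hp
end

section
/- For all integers r > p ≥ 0 with r ≥ 1, there exists an r-regular finite simple graph G of some order n together with a p-independent set A in G satisfying |A|·(2r - p) = n·r; in particular, the bound α_p(G) ≤ nr/(2r-p) for r-regular graphs is sharp. -/
/-!
Double counting the edges between a `p`-independent set `A` and its complement `B` in an
`r`-regular graph shows that equality needs `A` to induce a `p`-regular graph, `B` to be independent,
and `|A| (r - p) = |B| r`. Such a graph
arises from `p + 1` disjoint copies of the complete bipartite graph `K_{r, r-p}`, by joining, for
each vertex of the part of size `r`, its `p + 1` copies into a clique. Vertices in that part then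
have degree `(r - p) + p = r`, the others keep degree `r`, and `A`, the union of the parts of
size `r`, has `r (p + 1)` elements among `n = (2r - p)(p + 1)` vertices.
-/

open SimpleGraph

/-- `Fin k`-indexed copies of the complete bipartite graph on `α ⊕ β`, where the `k` copies of
each vertex of `α` are moreover made pairwise adjacent. -/
def linkedBipartite (α β : Type) (k : ℕ) : SimpleGraph ((α ⊕ β) × Fin k) where
  Adj u v := (u.1 = v.1 ∧ u.1.isLeft = true ∧ u.2 ≠ v.2) ∨
    (u.2 = v.2 ∧ u.1.isLeft ≠ v.1.isLeft)
  symm := ⟨by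
    rintro u v (⟨h1, h2, h3⟩ | ⟨h1, h2⟩)
    · exact Or.inl ⟨h1.symm, h1 ▸ h2, h3.symm⟩
    · exact Or.inr ⟨h1.symm, h2.symm⟩⟩
  loopless := ⟨by
    rintro u (⟨_, _, h⟩ | ⟨_, h⟩) <;> exact h rfl⟩

lemma linkedBipartite_neighborSet_inl {α β : Type} {k : ℕ} (a : α) (i : Fin k) :
    (linkedBipartite α β k).neighborSet (Sum.inl a, i) =
      ({Sum.inl a} ×ˢ {i}ᶜ) ∪ (Set.range Sum.inr ×ˢ {i}) := by
  ext ⟨x | x, j⟩ <;> simp [linkedBipartite] <;> grind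

lemma linkedBipartite_neighborSet_inr {α β : Type} {k : ℕ} (b : β) (i : Fin k) :
    (linkedBipartite α β k).neighborSet (Sum.inr b, i) = Set.range Sum.inl ×ˢ {i} := by
  ext ⟨x | x, j⟩ <;> simp [linkedBipartite] <;> grind

lemma ncard_range_inl (m n : ℕ) :
    (Set.range (Sum.inl : Fin m → Fin m ⊕ Fin n)).ncard = m := by
  rw [← Set.image_univ, Set.ncard_image_of_injective _ Sum.inl_injective]; simp

lemma ncard_range_inr (m n : ℕ) :
    (Set.range (Sum.inr : Fin n → Fin m ⊕ Fin n)).ncard = n := by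
  rw [← Set.image_univ, Set.ncard_image_of_injective _ Sum.inr_injective]; simp

lemma ncard_compl_singleton_fin (p : ℕ) (i : Fin (p + 1)) :
    ({i}ᶜ : Set (Fin (p + 1))).ncard = p := by
  rw [Set.ncard_compl]; simp

lemma linkedBipartite_isRegularDeg (r p : ℕ) (hpr : p < r) :
    (linkedBipartite (Fin r) (Fin (r - p)) (p + 1)).IsRegularDeg r := by
  rintro ⟨a | b, i⟩
  · rw [linkedBipartite_neighborSet_inl, Set.ncard_union_eq, Set.ncard_prod, Set.ncard_prod,
      ncard_compl_singleton_fin, ncard_range_inr]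
    · simp only [Set.ncard_singleton]; omega
    · rw [Set.disjoint_left]
      rintro ⟨x, j⟩ ⟨_, h⟩ ⟨_, h'⟩
      exact h h'
  · rw [linkedBipartite_neighborSet_inr, Set.ncard_prod, ncard_range_inl]
    simp

lemma linkedBipartite_isPIndepSet (r s p : ℕ) :
    (linkedBipartite (Fin r) (Fin s) (p + 1)).IsPIndepSet p
      (Set.range Sum.inl ×ˢ Set.univ) := by
  rintro ⟨_, i⟩ ⟨⟨a, rfl⟩, -⟩
  have h : (Set.range Sum.inl ×ˢ Set.univ) ∩
      (linkedBipartite (Fin r) (Fin s) (p + 1)).neighborSet (Sum.inl a, i) =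
        {Sum.inl a} ×ˢ {i}ᶜ := by
    rw [linkedBipartite_neighborSet_inl]
    ext ⟨x | x, j⟩ <;> simp
  rw [h, Set.ncard_prod, ncard_compl_singleton_fin]
  simp

/-- for all integers `r > p ≥ 0` with `r ≥ 1` there is an `r`-regular graph
`G` of some (positive) order `n` with a `p`-independent set `A` satisfying
`|A| · (2r - p) = n · r`; i.e. the bound `α_p(G) ≤ nr/(2r - p)` is sharp. -/
theorem pIndepNum_bound_sharp (r p : ℕ) (hr : 1 ≤ r) (hpr : p < r) :
    ∃ (n : ℕ) (G : SimpleGraph (Fin n)) (A : Set (Fin n)),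
      0 < n ∧ G.IsRegularDeg r ∧ G.IsPIndepSet p A ∧
      A.ncard * (2 * r - p) = n * r := by
  have hcard : Fintype.card ((Fin r ⊕ Fin (r - p)) × Fin (p + 1)) = (2 * r - p) * (p + 1) := by
    simp only [Fintype.card_prod, Fintype.card_sum, Fintype.card_fin]
    congr 1; omega
  let e := (Fintype.equivFinOfCardEq hcard).symm
  have hpre (S : Set ((Fin r ⊕ Fin (r - p)) × Fin (p + 1))) : (e ⁻¹' S).ncard = S.ncard :=
    Set.ncard_preimage_of_injective_subset_range e.injective (by simp [e.surjective.range_eq])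
  refine ⟨(2 * r - p) * (p + 1), (linkedBipartite (Fin r) (Fin (r - p)) (p + 1)).comap e,
    e ⁻¹' (Set.range Sum.inl ×ˢ Set.univ), ?_, ?_, ?_, ?_⟩
  · exact Nat.mul_pos (by omega) (by omega)
  · intro v
    exact (hpre _).trans (linkedBipartite_isRegularDeg r p hpr (e v))
  · intro v hv
    exact (hpre _).trans_le (linkedBipartite_isPIndepSet r (r - p) p (e v) hv)
  · rw [hpre, Set.ncard_prod, ncard_range_inl]
    simp only [Set.ncard_univ, Nat.card_eq_fintype_card, Fintype.card_fin]
    ring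
end

section
/- If G is a finite simple graph of order n, then the 1-independence number of its line graph satisfies 3·α_1(L(G)) ≤ 2n; equivalently, any set M of edges of G such that each edge of M shares an endpoint with at most one other edge of M has cardinality at most 2n/3. -/
/-!
Let `S` be a `1`-independent set of `L(G)`, viewed as a set of edges of `G`, and let `d v` be the
number of edges of `S` at `v`. Three edges of `S` through one vertex would give one of them two
neighbors in `S`, so `d v ≤ 2`. If both endpoints of `e = ab` in `S` had `d = 2`, the second edge
at `a` and the second edge at `b` would have to coincide, making that edge equal to `ab` as `G` is
simple; so some endpoint of `e` has `d = 1`. Now let each vertex `v` give `2` to its only edge in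
`S` if `d v = 1`, and `1` to each of its edges otherwise. A vertex gives at most `2` in total and
an edge receives at least `3`, so `3|S| ≤ 2n`.
-/

open SimpleGraph

namespace OneIndepLineGraph

variable {V : Type*} {G : SimpleGraph V}

/-- Two edges of a `1`-independent set of the line graph that both meet a third one coincide. -/
lemma eq_of_meet [Finite V] {S : Set G.edgeSet} (hS : G.lineGraph.IsPIndepSet 1 S)
    {e f g : G.edgeSet} (he : e ∈ S) (hf : f ∈ S) (hg : g ∈ S) (hef : f ≠ e) (heg : g ≠ e)
    {a b : V} (hae : a ∈ e.1) (haf : a ∈ f.1) (hbe : b ∈ e.1) (hbg : b ∈ g.1) : f = g := by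
  refine (Set.ncard_le_one (Set.toFinite _)).1 (hS e he) f ⟨hf, ?_⟩ g ⟨hg, ?_⟩
  · exact lineGraph_adj_iff_exists.2 ⟨hef.symm, a, hae, haf⟩
  · exact lineGraph_adj_iff_exists.2 ⟨heg.symm, b, hbe, hbg⟩

open Classical in
/-- The number of edges of `T` incident to `v`. -/
noncomputable def deg (T : Finset G.edgeSet) (v : V) : ℕ := (T.filter (fun e => v ∈ e.1)).card

open Classical in
/-- The amount that `v` gives to each edge of `T` containing it. -/
noncomputable def weight (T : Finset G.edgeSet) (v : V) : ℕ := if deg T v = 1 then 2 else 1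

lemma deg_le_two [Finite V] {T : Finset G.edgeSet} (hT : G.lineGraph.IsPIndepSet 1 (T : Set _))
    (v : V) : deg T v ≤ 2 := by
  classical
  by_contra! h
  obtain ⟨e, f, g, he, hf, hg, hef, heg, hfg⟩ := Finset.two_lt_card_iff.1 h
  simp only [Finset.mem_filter] at he hf hg
  exact hfg (eq_of_meet hT he.1 hf.1 hg.1 hef.symm heg.symm he.2 hf.2 he.2 hg.2)

lemma exists_ne_of_deg_ne_one {T : Finset G.edgeSet} {e : G.edgeSet} (he : e ∈ T) {v : V}
    (hv : v ∈ e.1) (h : deg T v ≠ 1) : ∃ f ∈ T, f ≠ e ∧ v ∈ f.1 := by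
  classical
  have hmem : e ∈ T.filter (fun e => v ∈ e.1) := by simp [he, hv]
  have hpos : 0 < deg T v := Finset.card_pos.2 ⟨e, hmem⟩
  have h1 : 1 < deg T v := by omega
  obtain ⟨f, hf, hfe⟩ := Finset.exists_mem_ne h1 e
  rw [Finset.mem_filter] at hf
  exact ⟨f, hf.1, hfe, hf.2⟩

open Classical in
lemma three_le_sum_weight [Fintype V] {T : Finset G.edgeSet}
    (hT : G.lineGraph.IsPIndepSet 1 (T : Set _)) {e : G.edgeSet} (he : e ∈ T) :
    3 ≤ ∑ v with v ∈ e.1, weight T v := by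
  obtain ⟨⟨a, b⟩, hab⟩ := e
  have hne : a ≠ b := G.ne_of_adj hab
  have hset : (Finset.univ.filter (fun v => v ∈ s(a, b))) = {a, b} := by ext; simp
  change 3 ≤ ∑ v with v ∈ s(a, b), weight T v
  rw [hset, Finset.sum_pair hne]
  have hor : deg T a = 1 ∨ deg T b = 1 := by
    by_contra! h
    obtain ⟨f, hf, hfe, haf⟩ := exists_ne_of_deg_ne_one he (Sym2.mem_mk_left a b) h.1
    obtain ⟨g, hg, hge, hbg⟩ := exists_ne_of_deg_ne_one he (Sym2.mem_mk_right a b) h.2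
    obtain rfl := eq_of_meet hT he hf hg hfe hge
      (Sym2.mem_mk_left a b) haf (Sym2.mem_mk_right a b) hbg
    exact hfe (Subtype.ext ((Sym2.mem_and_mem_iff hne).1 ⟨haf, hbg⟩))
  unfold weight
  split_ifs <;> omega

lemma three_mul_card_le [Fintype V] {T : Finset G.edgeSet}
    (hT : G.lineGraph.IsPIndepSet 1 (T : Set _)) : 3 * T.card ≤ 2 * Fintype.card V := by
  classical
  calc 3 * T.card = ∑ e ∈ T, 3 := by simp [mul_comm]
    _ ≤ ∑ e ∈ T, ∑ v with v ∈ e.1, weight T v :=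
        Finset.sum_le_sum fun e he => three_le_sum_weight hT he
    _ = ∑ v : V, ∑ e ∈ T with v ∈ e.1, weight T v :=
        Finset.sum_comm' (by simp)
    _ ≤ ∑ v : V, 2 := by
        refine Finset.sum_le_sum fun v _ => ?_
        have h : deg T v ≤ 2 := deg_le_two hT v
        rw [Finset.sum_const, smul_eq_mul]
        change deg T v * weight T v ≤ 2
        unfold weight
        split_ifs <;> omega
    _ = 2 * Fintype.card V := by simp [mul_comm]

end OneIndepLineGraph

/-- for any graph `G` of order `n`, the `1`-independence number of its line
graph satisfies `3 · α₁(L(G)) ≤ 2n`. -/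
theorem one_indepNum_lineGraph_le {V : Type*} [Fintype V] (G : SimpleGraph V) :
    3 * (G.lineGraph).pIndepNum 1 ≤ 2 * Fintype.card V := by
  classical
  -- The set of sizes is nonempty (it contains the size of the empty set), so its supremum is at
  -- most any upper bound.
  have h : G.lineGraph.pIndepNum 1 ≤ 2 * Fintype.card V / 3 := by
    refine csSup_le ⟨0, ∅, by simp [SimpleGraph.IsPIndepSet], by simp⟩ ?_
    rintro _ ⟨S, hS, rfl⟩
    lift S to Finset G.edgeSet using Set.toFinite S
    have := OneIndepLineGraph.three_mul_card_le hS
    rw [Set.ncard_coe_finset]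
    omega
  omega
end

section
/- If G is an r-regular finite simple graph of order n with r ≥ 2 even, then the 2-independence number of its line graph equals n, i.e., α_2(L(G)) = n. -/
/-!
Upper bound: if `S` is a set of edges in which every edge meets at most two others, then the
degrees `d` in the subgraph `(V, S)` satisfy `d a + d b ≤ 4` for each edge `ab ∈ S`, so
`1 / d a + 1 / d b ≥ 1`. Summing over `S`, every vertex contributes at most `1` to the left side,
so `|S| ≤ n` (`card_le_of_isPIndepSet_two`).

Lower bound: this is Petersen's 2-factor theorem, obtained from two applications of Hall's theorem
in the form of `exists_injective_of_degrees`. Write `r = 2k`. The bipartite graph joining each edge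
to the `2k` pairs `(v, i)` with `v` an endpoint and `i < k` has degrees `2k`, so each edge can be
given a tail in such a way that every vertex is the tail of at most `k` edges, hence the head of
at least `k` (`exists_tail`). In this orientation a second application gives an injective
`f : V → V` sending each vertex to an in-neighbour (`exists_two_factor`). The edges `{v, f v}` are
pairwise distinct because an edge has one head only, and `{v, f v}` meets only the edges of `f v`
and of `f⁻¹ v` among them.
-/

open SimpleGraph

/-- Hall's theorem under a degree condition: in a bipartite graph whose left degrees are at least
`d > 0` and whose right degrees are at most `d`, some matching saturates the left side. -/
theorem exists_injective_of_degrees {ι α : Type*} [Fintype ι] [DecidableEq α]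
    (t : ι → Finset α) (d : ℕ) (hd : 0 < d) (h1 : ∀ i, d ≤ (t i).card)
    (h2 : ∀ a, (Finset.univ.filter (fun i => a ∈ t i)).card ≤ d) :
    ∃ f : ι → α, Function.Injective f ∧ ∀ i, f i ∈ t i := by
  classical
  rw [← Finset.all_card_le_biUnion_card_iff_exists_injective]
  intro s
  have h := Finset.card_mul_le_card_mul (s := s) (t := s.biUnion t) (m := d) (n := d)
    (fun i a => a ∈ t i) ?_ ?_
  · exact Nat.le_of_mul_le_mul_right h hd
  · intro i hi
    refine (h1 i).trans (Finset.card_le_card ?_)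
    intro a ha
    simp only [Finset.mem_bipartiteAbove, Finset.mem_biUnion]
    exact ⟨⟨i, hi, ha⟩, ha⟩
  · intro a _
    refine le_trans (Finset.card_le_card ?_) (h2 a)
    intro i hi
    simp only [Finset.mem_bipartiteBelow] at hi
    simpa using hi.2

/-- An orientation of a graph with all degrees `2 * k`, given by the tail of each edge, in which all
out-degrees are at most `k`. -/
theorem exists_tail {V : Type*} [Fintype V] (G : SimpleGraph V) (k : ℕ) (hk : 0 < k)
    (hreg : G.IsRegularDeg (2 * k)) :
    ∃ T : Sym2 V → V, (∀ e ∈ G.edgeSet, T e ∈ e) ∧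
      ∀ v, {w | G.Adj v w ∧ T s(v, w) = v}.ncard ≤ k := by
  classical
  refine (exists_injective_of_degrees
    (fun e : G.edgeSet => Finset.univ.filter (fun p : V × Fin k => p.1 ∈ (e : Sym2 V)))
    (2 * k) (by omega) ?_ ?_).elim fun F ⟨hF, hFt⟩ => ?_
  · rintro ⟨e, he⟩
    induction e with | _ a b =>
    have hab : a ≠ b := G.ne_of_adj he
    have : (Finset.univ.filter (fun p : V × Fin k => p.1 ∈ s(a, b)))
        = ({a, b} : Finset V) ×ˢ (Finset.univ : Finset (Fin k)) := by
      ext p; simp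
    simp only [this, Finset.card_product, Finset.card_pair hab, Finset.card_univ, Fintype.card_fin,
      le_refl]
  · rintro ⟨v, i⟩
    simp only [Finset.mem_filter, Finset.mem_univ, true_and]
    rw [← hreg v, ← Set.ncard_coe_finset]
    -- an edge at `v` is determined by its other endpoint
    refine Set.ncard_le_ncard_of_injOn
      (fun e => if h : v ∈ (e : Sym2 V) then Sym2.Mem.other h else v) ?_ ?_
    · rintro ⟨e, he⟩ hv
      have hv : v ∈ e := by simpa using hv
      simp only [hv, dite_true]
      rw [SimpleGraph.mem_neighborSet, ← SimpleGraph.mem_edgeSet, Sym2.other_spec hv]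
      exact he
    · rintro ⟨e, he⟩ hv ⟨e', he'⟩ hv' h
      have hv : v ∈ e := by simpa using hv
      have hv' : v ∈ e' := by simpa using hv'
      simp only [hv, hv', dite_true] at h
      apply Subtype.ext
      simp only
      rw [← Sym2.other_spec hv, ← Sym2.other_spec hv', h]
  simp only [Finset.mem_filter, Finset.mem_univ, true_and] at hFt
  refine ⟨fun e => if h : e ∈ G.edgeSet then (F ⟨e, h⟩).1 else e.out.1, ?_, ?_⟩
  · intro e he
    simpa [he] using hFt ⟨e, he⟩
  · intro v
    -- the edges with tail `v` go to distinct slots `(v, i)`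
    have hk' : (Set.univ : Set (Fin k)).ncard = k := by simp [Set.ncard_univ]
    refine le_of_le_of_eq (Set.ncard_le_ncard_of_injOn (t := Set.univ)
      (fun w => if h : G.Adj v w then (F ⟨s(v, w), h⟩).2 else ⟨0, hk⟩) (by simp) ?_) hk'
    rintro w ⟨hw, hTw⟩ w' ⟨hw', hTw'⟩ h
    simp only [SimpleGraph.mem_edgeSet, hw, hw', dite_true] at hTw hTw' h
    have := hF (Prod.ext (hTw.trans hTw'.symm) h)
    simp only [Subtype.mk.injEq, Sym2.congr_right] at this
    exact this

/-- A 2-factor, given by a fixed-point-free permutation `f` without 2-cycles along edges of `G`;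
the absence of 2-cycles is expressed by injectivity of `v ↦ s(v, f v)`. -/
theorem exists_two_factor {V : Type*} [Fintype V] (G : SimpleGraph V) (k : ℕ) (hk : 0 < k)
    (hreg : G.IsRegularDeg (2 * k)) :
    ∃ f : V → V, Function.Injective f ∧ (∀ v, G.Adj v (f v)) ∧
      Function.Injective (fun v => s(v, f v)) := by
  classical
  obtain ⟨T, hT, hout⟩ := exists_tail G k hk hreg
  refine (exists_injective_of_degrees
    (fun v : V => Finset.univ.filter (fun w => G.Adj v w ∧ T s(v, w) ≠ v)) k hk ?_ ?_).elim
    fun f ⟨hf, hft⟩ => ?_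
  · intro v
    have h1 := hreg v
    have h2 := hout v
    rw [← Set.ncard_coe_finset]
    have h3 : G.neighborSet v ⊆ {w | G.Adj v w ∧ T s(v, w) = v} ∪
        ((Finset.univ.filter (fun w => G.Adj v w ∧ T s(v, w) ≠ v) : Finset V) : Set V) := by
      intro w hw
      rw [SimpleGraph.mem_neighborSet] at hw
      by_cases h : T s(v, w) = v <;> simp [hw, h]
    have h4 := (Set.ncard_le_ncard h3).trans (Set.ncard_union_le _ _)
    omega
  · intro w
    rw [← Set.ncard_coe_finset]
    refine le_trans (Set.ncard_le_ncard ?_) (hout w)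
    intro v hv
    simp only [Finset.mem_filter, Finset.mem_univ, true_and, Finset.coe_filter,
      Set.mem_ofPred_eq] at hv ⊢
    refine ⟨hv.1.symm, ?_⟩
    have hm := hT s(v, w) hv.1
    rw [Sym2.mem_iff] at hm
    rw [Sym2.eq_swap]
    exact hm.resolve_left hv.2
  simp only [Finset.mem_filter, Finset.mem_univ, true_and] at hft
  refine ⟨f, hf, fun v => (hft v).1, ?_⟩
  intro v w h
  simp only at h
  by_contra hvw
  have h' := h
  rw [Sym2.eq_iff] at h'
  obtain ⟨h1, -⟩ | ⟨h1, h2⟩ := h'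
  · exact hvw h1
  ·
    -- the tail of the edge `vw` would differ from both of its endpoints
    have hm := hT s(v, f v) (hft v).1
    have hv := (hft v).2
    have hw := (hft w).2
    rw [← h] at hw
    rw [Sym2.mem_iff] at hm
    rcases hm with hm | hm
    · exact hv hm
    · exact hw (hm.trans h2)

/-- A 2-independent set of the line graph has at most as many elements as `G` has vertices. -/
theorem card_le_of_isPIndepSet_two {V : Type*} [Fintype V] (G : SimpleGraph V)
    (S : Set G.edgeSet) (hS : G.lineGraph.IsPIndepSet 2 S) : S.ncard ≤ Fintype.card V := by
  classical
  set s : Finset G.edgeSet := S.toFinset with hs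
  set I : V → Finset G.edgeSet := fun v => s.filter (fun e => v ∈ (e : Sym2 V)) with hI
  -- the discharging inequality `1 / d a + 1 / d b ≥ 1` at an edge `ab ∈ S`
  have key : ∀ e ∈ s, (1 : ℚ) ≤
      ∑ v ∈ Finset.univ.filter (fun v => v ∈ (e : Sym2 V)), 1 / ((I v).card : ℚ) := by
    rintro ⟨e, he⟩ hes
    induction e with | _ a b =>
    have hab : a ≠ b := G.ne_of_adj he
    have hfil : (Finset.univ.filter (fun v => v ∈ s(a, b))) = ({a, b} : Finset V) := by
      ext p; simp
    simp only [hfil, Finset.sum_pair hab]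
    set x : G.edgeSet := ⟨s(a, b), he⟩
    have hxa : x ∈ I a := by simp [hI, hes, x]
    have hxb : x ∈ I b := by simp [hI, hes, x]
    have hdisj : Disjoint ((I a).erase x) ((I b).erase x) := by
      rw [Finset.disjoint_left]
      intro y hya hyb
      simp only [hI, Finset.mem_erase, Finset.mem_filter] at hya hyb
      exact hya.1 (Subtype.ext ((Sym2.mem_and_mem_iff hab).1 ⟨hya.2.2, hyb.2.2⟩))
    have hle : ((I a).erase x ∪ (I b).erase x).card ≤ 2 := by
      rw [← Set.ncard_coe_finset]
      refine le_trans (Set.ncard_le_ncard ?_) (hS x (by simpa [hs] using hes))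
      intro y hy
      simp only [hI, hs, Finset.coe_union, Set.mem_union, Finset.mem_coe, Finset.mem_erase,
        Finset.mem_filter, Set.mem_toFinset] at hy
      rw [Set.mem_inter_iff, SimpleGraph.mem_neighborSet, SimpleGraph.lineGraph_adj_iff_exists]
      rcases hy with ⟨h1, h2, h3⟩ | ⟨h1, h2, h3⟩
      · exact ⟨h2, Ne.symm h1, a, by simp [x], h3⟩
      · exact ⟨h2, Ne.symm h1, b, by simp [x], h3⟩
    rw [Finset.card_union_of_disjoint hdisj, Finset.card_erase_of_mem hxa,
      Finset.card_erase_of_mem hxb] at hle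
    have hpa : 0 < (I a).card := Finset.card_pos.2 ⟨x, hxa⟩
    have hpb : 0 < (I b).card := Finset.card_pos.2 ⟨x, hxb⟩
    have hsum : (I a).card + (I b).card ≤ 4 := by omega
    have hpa' : (0 : ℚ) < (I a).card := by exact_mod_cast hpa
    have hpb' : (0 : ℚ) < (I b).card := by exact_mod_cast hpb
    have hsum' : ((I a).card : ℚ) + (I b).card ≤ 4 := by exact_mod_cast hsum
    rw [div_add_div _ _ hpa'.ne' hpb'.ne', le_div_iff₀ (by positivity)]
    nlinarith [sq_nonneg (((I a).card : ℚ) - (I b).card)]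
  have hsumle : (s.card : ℚ) ≤ Fintype.card V := by
    calc (s.card : ℚ) = ∑ e ∈ s, (1 : ℚ) := by simp
      _ ≤ ∑ e ∈ s, ∑ v ∈ Finset.univ.filter (fun v => v ∈ (e : Sym2 V)),
            1 / ((I v).card : ℚ) := Finset.sum_le_sum key
      _ = ∑ v : V, ∑ e ∈ I v, 1 / ((I v).card : ℚ) := by
          apply Finset.sum_comm'
          intro e v
          simp [hI]
      _ ≤ ∑ v : V, (1 : ℚ) := by
          refine Finset.sum_le_sum fun v _ => ?_
          rw [Finset.sum_const, nsmul_eq_mul, mul_one_div]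
          exact div_self_le_one _
      _ = Fintype.card V := by simp
  rw [Set.ncard_eq_toFinset_card']
  exact_mod_cast hsumle

/-- if `G` is `r`-regular of order `n` with `r ≥ 2` even, then
`α₂(L(G)) = n`. -/
theorem two_indepNum_lineGraph_eq {V : Type*} [Fintype V] (G : SimpleGraph V) (r : ℕ)
    (hr : 2 ≤ r) (heven : Even r) (hreg : G.IsRegularDeg r) :
    (G.lineGraph).pIndepNum 2 = Fintype.card V := by
  classical
  obtain ⟨k, rfl⟩ := heven.exists_two_nsmul
  rw [smul_eq_mul] at hr hreg
  obtain ⟨f, hf, hadj, hinj⟩ := exists_two_factor G k (by omega) hreg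
  refine IsGreatest.csSup_eq ⟨?_, ?_⟩
  · let E : V → G.edgeSet := fun v => ⟨s(v, f v), hadj v⟩
    have hE : Function.Injective E := fun v w h => hinj (congrArg Subtype.val h)
    refine ⟨Set.range E, ?_, ?_⟩
    · rintro _ ⟨v, rfl⟩
      obtain ⟨u, hu⟩ := (Finite.injective_iff_surjective.1 hf) v
      refine le_trans (Set.ncard_le_ncard (t := {E (f v), E u}) ?_) 
        ((Set.ncard_insert_le _ _).trans (by rw [Set.ncard_singleton]))
      rintro _ ⟨⟨w, rfl⟩, hw⟩
      rw [SimpleGraph.mem_neighborSet, SimpleGraph.lineGraph_adj_iff_exists] at hw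
      obtain ⟨hne, x, hx1, hx2⟩ := hw
      simp only [E, Sym2.mem_iff] at hx1 hx2
      rcases hx1 with rfl | rfl <;> rcases hx2 with h | h
      · exact absurd (congrArg E h) hne
      · right
        rw [Set.mem_singleton_iff, hf (hu.trans h)]
      · left
        rw [h]
      · exact absurd (congrArg E (hf h)) hne
    · rw [← Set.image_univ, Set.ncard_image_of_injective _ hE, Set.ncard_univ,
        Nat.card_eq_fintype_card]
  · rintro _ ⟨S, hS, rfl⟩
    exact card_le_of_isPIndepSet_two G S hS
end

section
/- If G is an r-regular finite simple graph with r even and r ≥ 2, then α_p(G) ≤ α_q(L(G)) for all integers p ≥ 0 and q ≥ 2. -/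
open SimpleGraph

/-!
Since `α_p(G) ≤ |V|`, it suffices to find `|V|` edges forming a `2`-independent set of `L(G)`.
These are the edges of a `2`-factor, which exists by Petersen's theorem; the proof below applies
Hall's theorem twice.

* `exists_balanced_orientation`: matching the edges of `G` injectively into `V × Fin (r / 2)`, each
  edge going to a slot of one of its endpoints (its head), orients `G` with all in-degrees at most
  `r / 2`. Since `r` is even, all out-degrees are then at least `r / 2`.
* `exists_successor`: matching tails with heads gives an injection `σ : V → V` such that every
  `u → σ u` is an oriented edge.

The edges `s(u, σ u)` are pairwise distinct because no edge is oriented both ways. The only ones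
that can meet `s(u, σ u)` are those indexed by `σ u` and by the preimage of `u` under `σ`.
-/

open Finset in
/-- Hall's theorem for biregular-type relations: degrees at least `d > 0` on the left and at most
`d` on the right give an injective choice. -/
lemma exists_injective_of_degree {α β : Type*} [Fintype α] [Fintype β] (R : α → β → Prop) (d : ℕ)
    (hd : 0 < d) (hl : ∀ a, d ≤ {b | R a b}.ncard) (hu : ∀ b, {a | R a b}.ncard ≤ d) :
    ∃ f : α → β, Function.Injective f ∧ ∀ a, R a (f a) := by
  classical
  rw [← Fintype.all_card_le_filter_rel_iff_exists_injective R]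
  intro A
  refine Nat.le_of_mul_le_mul_right ?_ hd
  refine Finset.card_mul_le_card_mul (s := A) R (fun a ha => ?_) (fun b _ => ?_)
  · refine (hl a).trans ?_
    rw [← Set.ncard_coe_finset]
    refine Set.ncard_le_ncard (fun b hb => ?_) (Set.toFinite _)
    have hb' : R a b := hb
    simp only [mem_coe, mem_bipartiteAbove, mem_filter, mem_univ, true_and]
    exact ⟨⟨a, ha, hb'⟩, hb'⟩
  · refine le_trans ?_ (hu b)
    rw [← Set.ncard_coe_finset]
    refine Set.ncard_le_ncard (fun a ha => ?_) (Set.toFinite _)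
    simp only [mem_coe, mem_bipartiteBelow] at ha
    exact ha.2

/-- The relation `D u v` says that the edge `s(u, v)` is oriented from `u` to `v`. -/
lemma exists_balanced_orientation {V : Type*} [Fintype V] (G : SimpleGraph V) (r : ℕ)
    (hr : 2 ≤ r) (heven : Even r) (hreg : G.IsRegularDeg r) :
    ∃ D : V → V → Prop, (∀ u v, D u v → G.Adj u v) ∧ (∀ u v, D u v → ¬ D v u) ∧
      (∀ u, r / 2 ≤ {v | D u v}.ncard) ∧ (∀ v, {u | D u v}.ncard ≤ r / 2) := by
  classical
  have h2 : r / 2 * 2 = r := Nat.div_mul_cancel heven.two_dvd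
  obtain ⟨f, hf, hfe⟩ := exists_injective_of_degree
    (fun (e : G.edgeSet) (s : V × Fin (r / 2)) => s.1 ∈ (e : Sym2 V)) r (by omega)
    (by
      rintro ⟨e, he⟩
      induction e with | _ a b =>
      have hab : a ≠ b := G.ne_of_adj he
      have : {s : V × Fin (r / 2) | s.1 ∈ s(a, b)} =
          ((({a, b} : Finset V) ×ˢ Finset.univ : Finset (V × Fin (r / 2))) : Set _) := by
        ext s; simp
      simp only [this, Set.ncard_coe_finset, Finset.card_product, Finset.card_pair hab,
        Finset.card_univ, Fintype.card_fin]
      omega)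
    (by
      rintro ⟨v, i⟩
      refine le_of_le_of_eq ?_ (hreg v)
      rw [← Set.ncard_image_of_injective _ Subtype.val_injective]
      refine le_trans (Set.ncard_le_ncard (t := (fun w => s(v, w)) '' G.neighborSet v) ?_
        (Set.toFinite _)) (Set.ncard_image_le (Set.toFinite _))
      rintro _ ⟨⟨e, he⟩, hv, rfl⟩
      obtain ⟨w, rfl⟩ := Sym2.mem_iff_exists.1 hv
      exact ⟨w, he, rfl⟩)
  let D : V → V → Prop := fun u v => ∃ h : G.Adj u v, (f ⟨s(u, v), h⟩).1 = v
  have hin : ∀ v, {u | D u v}.ncard ≤ r / 2 := by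
    intro v
    let g : {u | D u v} → Fin (r / 2) := fun u => (f ⟨s(u.1, v), u.2.choose⟩).2
    have hg : Function.Injective g := by
      rintro ⟨u, hu⟩ ⟨w, hw⟩ h
      have h1 := hu.choose_spec
      have h3 := hw.choose_spec
      have := congrArg Subtype.val (hf (Prod.ext (h1.trans h3.symm) h))
      exact Subtype.ext (Sym2.congr_left.1 this)
    have := Nat.card_le_card_of_injective g hg
    rwa [Nat.card_coe_set_eq, Nat.card_fin] at this
  refine ⟨D, fun u v h => h.1, ?_, fun u => ?_, hin⟩
  · rintro u v ⟨h, h1⟩ ⟨h', h1'⟩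
    have : (⟨s(u, v), h⟩ : G.edgeSet) = ⟨s(v, u), h'⟩ := Subtype.ext Sym2.eq_swap
    rw [this, h1'] at h1
    exact G.ne_of_adj h h1
  · have hsub : G.neighborSet u ⊆ {v | D u v} ∪ {v | D v u} := by
      intro v (hv : G.Adj u v)
      have hs : (⟨s(u, v), hv⟩ : G.edgeSet) = ⟨s(v, u), hv.symm⟩ := Subtype.ext Sym2.eq_swap
      rcases Sym2.mem_iff.1 (hfe ⟨s(u, v), hv⟩) with h | h
      · exact Or.inr ⟨hv.symm, hs ▸ h⟩
      · exact Or.inl ⟨hv, h⟩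
    have := (Set.ncard_le_ncard hsub (Set.toFinite _)).trans (Set.ncard_union_le _ _)
    rw [hreg u] at this
    have := hin u
    omega

/-- Petersen's `2`-factor theorem: `σ` is the successor map along oriented cycles covering `V`. The
condition `σ (σ u) ≠ u` excludes cycles of length two. -/
lemma exists_successor {V : Type*} [Fintype V] (G : SimpleGraph V) (r : ℕ)
    (hr : 2 ≤ r) (heven : Even r) (hreg : G.IsRegularDeg r) :
    ∃ σ : V → V, Function.Injective σ ∧ (∀ u, G.Adj u (σ u)) ∧ ∀ u, σ (σ u) ≠ u := by
  obtain ⟨D, hD, hasymm, hout, hin⟩ := exists_balanced_orientation G r hr heven hreg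
  obtain ⟨σ, hσ, h⟩ := exists_injective_of_degree D (r / 2) (by omega) hout hin
  refine ⟨σ, hσ, fun u => hD _ _ (h u), fun u hu => hasymm _ _ (h u) ?_⟩
  simpa only [hu] using h (σ u)

/-- if `G` is `r`-regular with `r ≥ 2` even, then `α_p(G) ≤ α_q(L(G))` for
all `p ≥ 0` and `q ≥ 2`. -/
theorem valid_triple_even {V : Type*} [Fintype V] (G : SimpleGraph V) (r : ℕ)
    (hr : 2 ≤ r) (heven : Even r) (hreg : G.IsRegularDeg r) (p q : ℕ) (hq : 2 ≤ q) :
    G.pIndepNum p ≤ (G.lineGraph).pIndepNum q := by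
  classical
  obtain ⟨σ, hσ, hadj, hne⟩ := exists_successor G r hr heven hreg
  let E : V → G.edgeSet := fun u => ⟨s(u, σ u), hadj u⟩
  have hE : Function.Injective E := by
    intro u v h
    rcases Sym2.eq_iff.1 (congrArg Subtype.val h) with h | h
    · exact h.1
    · exact absurd (by rw [← h.1, h.2]) (hne v)
  have hind : G.lineGraph.IsPIndepSet q (Set.range E) := by
    rintro _ ⟨u, rfl⟩
    refine le_trans ?_ hq
    -- By injectivity of `σ`, the set `{v | σ v = u}` has at most one element.
    have hsub : Set.range E ∩ G.lineGraph.neighborSet (E u) ⊆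
        E '' ({σ u} ∪ {v | σ v = u}) := by
      rintro _ ⟨⟨v, rfl⟩, hv⟩
      refine ⟨v, ?_, rfl⟩
      obtain ⟨hne', w, hw, hw'⟩ := SimpleGraph.lineGraph_adj_iff_exists.1 hv
      have huv : u ≠ v := fun h => hne' (congrArg E h)
      rcases Sym2.mem_iff.1 hw with rfl | rfl <;> rcases Sym2.mem_iff.1 hw' with h | h
      · exact absurd h huv
      · exact Or.inr h.symm
      · exact Or.inl h.symm
      · exact absurd (hσ h) huv
    have h1 : {v | σ v = u}.ncard ≤ 1 :=
      (Set.ncard_le_one (Set.toFinite _)).2 fun a ha b hb => hσ (ha.trans hb.symm)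
    calc _ ≤ _ := Set.ncard_le_ncard hsub (Set.toFinite _)
      _ ≤ _ := Set.ncard_image_le (Set.toFinite _)
      _ ≤ _ := Set.ncard_union_le _ _
      _ ≤ 2 := by rw [Set.ncard_singleton]; omega
  have hcard : (Set.range E).ncard = Nat.card V := by
    rw [← Set.image_univ, Set.ncard_image_of_injective _ hE, Set.ncard_univ]
  refine le_trans (b := Nat.card V) ?_ ?_
  · refine csSup_le ⟨0, ∅, by simp [SimpleGraph.IsPIndepSet], Set.ncard_empty _⟩ ?_
    rintro _ ⟨S, -, rfl⟩
    exact Set.ncard_le_card S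
  · refine le_csSup ⟨Nat.card G.edgeSet, ?_⟩ ⟨_, hind, hcard⟩
    rintro _ ⟨S, -, rfl⟩
    exact Set.ncard_le_card S
end

section
/- If G is an r-regular finite simple graph with r ≥ 2, and q ≥ 3 and p ≥ 0 are integers, then α_p(G) ≤ α_q(L(G)). -/
/-!
Since `α_p(G) ≤ |V|`, it suffices to find a set of at least `|V|` edges of `G` in which every edge
meets at most three others. The edge set of a spanning subgraph `H` whose degrees are all `2` or
`3`, and in which no two vertices of degree `3` are adjacent, has this property: it has at least
`|V|` edges by the handshake lemma, and an edge `uv` meets `(d(u) - 1) + (d(v) - 1) ≤ 3` others.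

Such an `H` exists by Thomassen's argument for Tutte's theorem on `{k, k+1}`-factors. The graph `G`
is itself an `{r, r+1}`-factor. An inclusion-minimal `{k+1, k+2}`-factor has no edge between two
vertices of degree `k+2` (`exists_factor_indep`), since such an edge could be deleted. By Hall's
theorem the vertices of degree `k+2` can then be matched to neighbours of degree `k+1`, and deleting
this matching yields a `{k, k+1}`-factor (`exists_factor_step`). Descending to `k = 2` and passing
to a minimal `{2, 3}`-factor gives `H`.
-/

open SimpleGraph

/-- `H` is a spanning subgraph of `G` all of whose degrees are `k` or `k + 1`. -/
def IsNearFactor {V : Type*} (G : SimpleGraph V) (k : ℕ) (H : SimpleGraph V) : Prop :=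
  H ≤ G ∧ ∀ v, (H.neighborSet v).ncard = k ∨ (H.neighborSet v).ncard = k + 1

/-- A minimal `{k, k+1}`-factor has no edge joining two vertices of degree `k + 1`, because
deleting such an edge would leave a `{k, k+1}`-factor. -/
lemma exists_factor_indep {V : Type*} [Fintype V] (G : SimpleGraph V) (k : ℕ)
    (h : ∃ H, IsNearFactor G k H) :
    ∃ H, IsNearFactor G k H ∧ ∀ u v, H.Adj u v →
      (H.neighborSet u).ncard = k + 1 → (H.neighborSet v).ncard = k + 1 → False := by
  obtain ⟨H, hH, hmin⟩ := (wellFounded_lt (α := SimpleGraph V)).has_min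
    {H | IsNearFactor G k H} h
  refine ⟨H, hH, fun u v huv hu hv => ?_⟩
  refine hmin (H.deleteEdges {s(u, v)}) ⟨(H.deleteEdges_le _).trans hH.1, fun x => ?_⟩ ?_
  · by_cases hxu : x = u
    · subst hxu
      have : (H.deleteEdges {s(x, v)}).neighborSet x = H.neighborSet x \ {v} := by
        ext y
        simp [deleteEdges_adj]
        grind [huv.ne]
      rw [this, Set.ncard_sdiff_singleton_of_mem (by simpa using huv), hu]
      simp
    · by_cases hxv : x = v
      · subst hxv
        have : (H.deleteEdges {s(u, x)}).neighborSet x = H.neighborSet x \ {u} := by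
          ext y
          simp [deleteEdges_adj]
          grind [huv.ne]
        rw [this, Set.ncard_sdiff_singleton_of_mem (by simpa using huv.symm), hv]
        simp
      · have : (H.deleteEdges {s(u, v)}).neighborSet x = H.neighborSet x := by
          ext y
          simp [deleteEdges_adj]
          grind
        rw [this]
        exact hH.2 x
  · refine lt_of_le_of_ne (H.deleteEdges_le _) fun he => ?_
    have : (H.deleteEdges {s(u, v)}).Adj u v := by rw [he]; exact huv
    simp [deleteEdges_adj] at this

open Classical in
/-- Hall's theorem for the vertices of maximum degree: they can be sent injectively to neighbours.
The condition holds because each of them has `d` neighbours and each vertex at most `d`. -/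
lemma exists_matching_of_max_degree {V : Type*} [Fintype V] (H : SimpleGraph V) (d : ℕ)
    (hd : 0 < d) (hle : ∀ v, (H.neighborSet v).ncard ≤ d) :
    ∃ f : {v // (H.neighborSet v).ncard = d} → V,
      Function.Injective f ∧ ∀ v, H.Adj v.1 (f v) := by
  have key := (Finset.all_card_le_biUnion_card_iff_exists_injective
    (fun v : {v // (H.neighborSet v).ncard = d} => (H.neighborSet v.1).toFinset)).1 ?_
  · obtain ⟨f, hf, hm⟩ := key
    exact ⟨f, hf, fun v => by simpa using hm v⟩
  intro s
  refine Nat.le_of_mul_le_mul_right (Finset.card_mul_le_card_mul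
    (fun (v : {v // (H.neighborSet v).ncard = d}) w => H.Adj v w) (m := d) (n := d) ?_ ?_) hd
  · intro a ha
    have h1 : d = (H.neighborSet a.1).toFinset.card := by
      rw [← Set.ncard_eq_toFinset_card']; exact a.2.symm
    conv_lhs => rw [h1]
    apply Finset.card_le_card
    intro w hw
    simp only [Finset.bipartiteAbove, Finset.mem_filter, Finset.mem_biUnion]
    exact ⟨⟨a, ha, hw⟩, by simpa using hw⟩
  · intro b _
    refine le_trans ?_ (hle b)
    rw [Set.ncard_eq_toFinset_card']
    apply Finset.card_le_card_of_injOn Subtype.val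
    · intro a ha
      simp only [Finset.bipartiteBelow, Finset.coe_filter, Set.mem_ofPred_eq] at ha
      simpa using ha.2.symm
    · exact Subtype.val_injective.injOn

/-- Thomassen's descent: deleting a matching that covers the vertices of degree `k + 2`, and meets
each vertex of degree `k + 1` at most once, turns a `{k+1, k+2}`-factor into a
`{k, k+1}`-factor. -/
lemma exists_factor_step {V : Type*} [Fintype V] (G : SimpleGraph V) (k : ℕ)
    (h : ∃ H, IsNearFactor G (k + 1) H) : ∃ H, IsNearFactor G k H := by
  obtain ⟨H, ⟨hHG, hdeg⟩, hind⟩ := exists_factor_indep G (k + 1) h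
  obtain ⟨f, hf, hadj⟩ := exists_matching_of_max_degree H (k + 1 + 1) (by omega)
    (fun v => by have := hdeg v; omega)
  have hfT : ∀ v, (H.neighborSet (f v)).ncard ≠ k + 1 + 1 := fun v hv =>
    hind _ _ (hadj v) v.2 hv
  set M : Set (Sym2 V) := Set.range fun v => s(v.1, f v) with hM
  refine ⟨H.deleteEdges M, (H.deleteEdges_le _).trans hHG, fun x => ?_⟩
  by_cases hx : (H.neighborSet x).ncard = k + 1 + 1
  · have : (H.deleteEdges M).neighborSet x = H.neighborSet x \ {f ⟨x, hx⟩} := by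
      ext y
      simp only [mem_neighborSet, deleteEdges_adj, hM, Set.mem_range, Set.mem_sdiff,
        Set.mem_singleton_iff]
      refine and_congr_right fun _ => not_congr ⟨?_, fun hy => ⟨⟨x, hx⟩, by rw [hy]⟩⟩
      rintro ⟨v, hv⟩
      rcases Sym2.eq_iff.1 hv with ⟨h1, h2⟩ | ⟨h1, h2⟩
      · subst h1; exact h2.symm
      · exact absurd (h2 ▸ hx) (hfT v)
    rw [this, Set.ncard_sdiff_singleton_of_mem ((H.mem_neighborSet _ _).2 (hadj ⟨x, hx⟩)), hx]
    simp
  · have hx1 : (H.neighborSet x).ncard = k + 1 := (hdeg x).resolve_right hx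
    by_cases hr : ∃ v, f v = x
    · obtain ⟨v, rfl⟩ := hr
      have : (H.deleteEdges M).neighborSet (f v) = H.neighborSet (f v) \ {v.1} := by
        ext y
        simp only [mem_neighborSet, deleteEdges_adj, hM, Set.mem_range, Set.mem_sdiff,
          Set.mem_singleton_iff]
        refine and_congr_right fun _ => not_congr
          ⟨?_, fun hy => ⟨v, by rw [hy]; exact Sym2.eq_swap⟩⟩
        rintro ⟨w, hw⟩
        rcases Sym2.eq_iff.1 hw with ⟨h1, h2⟩ | ⟨h1, h2⟩
        · exact absurd (h1 ▸ w.2) hx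
        · rw [← h1, hf h2]
      rw [this, Set.ncard_sdiff_singleton_of_mem ((H.mem_neighborSet _ _).2 (hadj v).symm), hx1]
      simp
    · have : (H.deleteEdges M).neighborSet x = H.neighborSet x := by
        ext y
        simp only [mem_neighborSet, deleteEdges_adj, hM, Set.mem_range]
        refine and_iff_left ?_
        rintro ⟨w, hw⟩
        rcases Sym2.eq_iff.1 hw with ⟨h1, h2⟩ | ⟨h1, h2⟩
        · exact hx (h1 ▸ w.2)
        · exact hr ⟨w, h2⟩
      rw [this]
      exact Or.inr hx1

lemma exists_two_three_factor {V : Type*} [Fintype V] (G : SimpleGraph V) (r : ℕ)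
    (hr : 2 ≤ r) (hreg : G.IsRegularDeg r) : ∃ H, IsNearFactor G 2 H :=
  Nat.decreasingInduction' (P := fun k => ∃ H, IsNearFactor G k H)
    (fun k _ _ h => exists_factor_step G k h) hr ⟨G, le_rfl, fun v => Or.inl (hreg v)⟩

/-- `α_q(L(G)) ≥ |E(H)|` for a subgraph `H` in which `d(u) + d(v) ≤ q + 2` for every edge `uv`. -/
lemma ncard_edgeSet_le_pIndepNum_lineGraph {V : Type*} [Fintype V] (G H : SimpleGraph V) (q : ℕ)
    (hHG : H ≤ G)
    (hsum : ∀ u v, H.Adj u v →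
      (H.neighborSet u).ncard + (H.neighborSet v).ncard ≤ q + 2) :
    H.edgeSet.ncard ≤ G.lineGraph.pIndepNum q := by
  classical
  refine le_csSup ⟨Nat.card G.edgeSet, ?_⟩ ⟨{e | e.1 ∈ H.edgeSet}, ?_, ?_⟩
  · rintro n ⟨S, -, rfl⟩
    exact Set.ncard_le_card S
  · rintro ⟨e, heG⟩ heH
    induction e using Sym2.ind with
    | _ u v =>
    have huv : H.Adj u v := heH
    have hinc : ∀ w, (H.incidenceSet w).ncard = (H.neighborSet w).ncard := fun w => by
      rw [← Nat.card_coe_set_eq, ← Nat.card_coe_set_eq]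
      exact Nat.card_congr (H.incidenceSetEquivNeighborSet w)
    rw [← Set.ncard_image_of_injective _ Subtype.val_injective]
    have hsub : Subtype.val '' ({e : G.edgeSet | e.1 ∈ H.edgeSet} ∩
        G.lineGraph.neighborSet ⟨s(u, v), heG⟩) ⊆
        (H.incidenceSet u \ {s(u, v)}) ∪ (H.incidenceSet v \ {s(u, v)}) := by
      rintro _ ⟨⟨e, he⟩, ⟨heH', hne, x, hx1, hx2⟩, rfl⟩
      have hne' : e ≠ s(u, v) := fun h => hne (Subtype.ext h.symm)
      rcases Sym2.mem_iff.1 hx1 with rfl | rfl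
      · exact Or.inl ⟨⟨heH', hx2⟩, hne'⟩
      · exact Or.inr ⟨⟨heH', hx2⟩, hne'⟩
    refine (Set.ncard_le_ncard hsub (Set.toFinite _)).trans ((Set.ncard_union_le _ _).trans ?_)
    rw [Set.ncard_sdiff_singleton_of_mem (H.mk'_mem_incidenceSet_left_iff.2 huv),
      Set.ncard_sdiff_singleton_of_mem (H.mk'_mem_incidenceSet_right_iff.2 huv), hinc, hinc]
    have h1 : 0 < (H.neighborSet u).ncard := (Set.ncard_pos (Set.toFinite _)).2 ⟨v, huv⟩
    have h2 : 0 < (H.neighborSet v).ncard := (Set.ncard_pos (Set.toFinite _)).2 ⟨u, huv.symm⟩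
    have := hsum u v huv
    omega
  · rw [← Set.ncard_image_of_injective _ Subtype.val_injective]
    congr 1
    ext e
    simp only [Set.mem_image, Set.mem_ofPred_eq, Subtype.exists, exists_and_left, exists_prop,
      exists_eq_right_right]
    exact ⟨fun h => h.1, fun h => ⟨h, edgeSet_mono hHG h⟩⟩

lemma card_le_ncard_edgeSet {V : Type*} [Fintype V] (H : SimpleGraph V)
    (h : ∀ v, 2 ≤ (H.neighborSet v).ncard) : Fintype.card V ≤ H.edgeSet.ncard := by
  classical
  have hs := H.sum_degrees_eq_twice_card_edges
  have hc : ∑ _v : V, 2 ≤ ∑ v, H.degree v := Finset.sum_le_sum fun v _ => by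
    have := h v
    rwa [Set.ncard_eq_toFinset_card'] at this
  rw [hs, Finset.sum_const, Finset.card_univ, smul_eq_mul] at hc
  rw [Set.ncard_eq_toFinset_card']
  change _ ≤ H.edgeFinset.card
  omega

/-- if `G` is `r`-regular with `r ≥ 2`, and `q ≥ 3`, `p ≥ 0`, then
`α_p(G) ≤ α_q(L(G))`. -/
theorem valid_triple_q_ge_three {V : Type*} [Fintype V] (G : SimpleGraph V) (r : ℕ)
    (hr : 2 ≤ r) (hreg : G.IsRegularDeg r) (p q : ℕ) (hq : 3 ≤ q) :
    G.pIndepNum p ≤ (G.lineGraph).pIndepNum q := by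
  obtain ⟨H, ⟨hHG, hdeg⟩, hind⟩ :=
    exists_factor_indep G 2 (exists_two_three_factor G r hr hreg)
  have hV : G.pIndepNum p ≤ Fintype.card V := by
    refine csSup_le ⟨_, ∅, by simp [IsPIndepSet], rfl⟩ ?_
    rintro n ⟨S, -, rfl⟩
    rw [← Nat.card_eq_fintype_card]
    exact Set.ncard_le_card S
  refine hV.trans ((card_le_ncard_edgeSet H fun v => ?_).trans
    (ncard_edgeSet_le_pIndepNum_lineGraph G H q hHG fun u v huv => ?_))
  · have := hdeg v
    omega
  · have := hind u v huv
    rcases hdeg u with hu | hu <;> rcases hdeg v with hv | hv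
    · omega
    · omega
    · omega
    · exact (this hu hv).elim
end

section
/- If G is an r-regular finite simple graph with r ≥ 2, then α_3(L(G)) ≥ n, where n is the order of G; that is, G contains a set of at least n edges each of which shares an endpoint with at most 3 others in the set. -/
/-!
A spanning subgraph `H ≤ G` with all degrees in `{2, 3}`, in which no two vertices of degree `3`
are adjacent, has at least `n` edges, and an edge `uv` of `H` meets
`(deg u - 1) + (deg v - 1) ≤ 3` other edges of `H`; so its edge set is the set we want.

Such an `H` is found by lowering degrees one step at a time. A graph with all degrees in
`{k, k + 1}` can be thinned, by taking a minimal subgraph with that property, until the set `A` of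
vertices of degree `k + 1` is independent (`exists_thin`). If `k ≥ 3`, Hall's theorem matches `A`
into its complement: each vertex of `A` has `k + 1` neighbors, all outside `A`, and no vertex has
more than `k + 1`. Deleting the matching leaves degrees in `{k - 1, k}` (`exists_lower`). An
`r`-regular graph has degrees in `{2, 3}` if `r = 2` and in `{r - 1, r}` otherwise, so the descent
can start.
-/

open SimpleGraph

namespace ThreeIndep

variable {V : Type*}

/-- All degrees of `G` lie in `{k, k + 1}`. -/
def NearReg (G : SimpleGraph V) (k : ℕ) : Prop :=
  ∀ v, k ≤ (G.neighborSet v).ncard ∧ (G.neighborSet v).ncard ≤ k + 1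

/-- The vertices of degree `d` form an independent set of `G`. -/
def DegIndep (G : SimpleGraph V) (d : ℕ) : Prop :=
  ∀ u v, G.Adj u v → ¬ ((G.neighborSet u).ncard = d ∧ (G.neighborSet v).ncard = d)

lemma card_le_ncard_edgeSet [Fintype V] (H : SimpleGraph V) (hH : NearReg H 2) :
    Fintype.card V ≤ H.edgeSet.ncard := by
  classical
  have h := H.sum_degrees_eq_twice_card_edges
  have h2 : ∑ _v : V, 2 ≤ ∑ v, H.degree v := by
    refine Finset.sum_le_sum fun v _ => ?_
    rw [← SimpleGraph.card_neighborFinset_eq_degree, ← Set.ncard_coe_finset,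
      SimpleGraph.coe_neighborFinset]
    exact (hH v).1
  have h3 : H.edgeSet.ncard = H.edgeFinset.card := by
    rw [← Set.ncard_coe_finset, SimpleGraph.coe_edgeFinset]
  simp at h2
  omega

variable [Finite V]

lemma ncard_sdiff {H M : SimpleGraph V} (h : M ≤ H) (v : V) :
    ((H \ M).neighborSet v).ncard + (M.neighborSet v).ncard = (H.neighborSet v).ncard := by
  have e : (H \ M).neighborSet v = H.neighborSet v \ M.neighborSet v := by
    ext w; simp
  rw [e]
  exact Set.ncard_sdiff_add_ncard_of_subset (fun w hw => h hw)

lemma exists_thin (G : SimpleGraph V) (k : ℕ) (hG : NearReg G k) :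
    ∃ H ≤ G, NearReg H k ∧ DegIndep H (k + 1) := by
  obtain ⟨H, hHG, hH⟩ := (Set.toFinite {H : SimpleGraph V | NearReg H k}).exists_le_minimal hG
  refine ⟨H, hHG, hH.prop, ?_⟩
  rintro u v huv ⟨hu, hv⟩
  have hM : SimpleGraph.edge u v ≤ H := by
    intro a b hab
    rw [SimpleGraph.edge_adj] at hab
    rcases hab with ⟨⟨rfl, rfl⟩ | ⟨rfl, rfl⟩, _⟩
    · exact huv
    · exact huv.symm
  have hnr : NearReg (H \ SimpleGraph.edge u v) k := by
    intro w
    have h1 := ncard_sdiff hM w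
    have h2 := hH.prop w
    by_cases hw : w = u ∨ w = v
    · have : ((SimpleGraph.edge u v).neighborSet w).ncard ≤ 1 := by
        rw [Set.ncard_le_one_iff]
        intro a b ha hb
        simp only [SimpleGraph.mem_neighborSet, SimpleGraph.edge_adj] at ha hb
        grind
      rcases hw with rfl | rfl <;> omega
    · have : (SimpleGraph.edge u v).neighborSet w = ∅ := by
        ext a
        simp only [SimpleGraph.mem_neighborSet, SimpleGraph.edge_adj, Set.mem_empty_iff_false]
        grind
      rw [this, Set.ncard_empty] at h1
      omega
  have hle := hH.le_of_le hnr sdiff_le huv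
  simp [SimpleGraph.edge_adj, huv.ne] at hle

lemma exists_lower (H : SimpleGraph V) (k : ℕ) (hH : NearReg H (k + 1))
    (hI : DegIndep H (k + 2)) : ∃ H' ≤ H, NearReg H' k := by
  classical
  have := Fintype.ofFinite V
  let A := {v : V // (H.neighborSet v).ncard = k + 2}
  have hcard : ∀ v, (H.neighborFinset v).card = (H.neighborSet v).ncard := by
    intro v
    rw [← Set.ncard_coe_finset, SimpleGraph.coe_neighborFinset]
  -- Hall's condition for matching `A` along edges of `H`, by counting edges between `S` and `N(S)`
  obtain ⟨f, hf, hfm⟩ := (Finset.all_card_le_biUnion_card_iff_exists_injective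
    (fun a : A => H.neighborFinset a.1)).1 (by
      intro S
      have key := Finset.card_mul_le_card_mul (s := S)
        (t := S.biUnion fun a : A => H.neighborFinset a.1)
        (fun (a : A) (b : V) => H.Adj a.1 b) (m := k + 2) (n := k + 2) (by
          intro a ha
          refine le_of_eq_of_le (a.2.symm.trans (hcard a.1).symm) ?_
          apply Finset.card_le_card
          intro b hb
          rw [Finset.mem_bipartiteAbove]
          exact ⟨Finset.mem_biUnion.2 ⟨a, ha, hb⟩, by simpa using hb⟩) (by
          intro b _
          refine le_trans ?_ (hH b).2
          rw [← hcard, ← Finset.card_image_of_injective _ Subtype.val_injective]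
          apply Finset.card_le_card
          intro a ha
          obtain ⟨a', ha', rfl⟩ := Finset.mem_image.1 ha
          rw [Finset.mem_bipartiteBelow] at ha'
          simpa using ha'.2.symm)
      exact Nat.le_of_mul_le_mul_right key (by omega))
  have hadj : ∀ a : A, H.Adj a.1 (f a) := fun a => by simpa using hfm a
  have hnot : ∀ a : A, (H.neighborSet (f a)).ncard ≠ k + 2 := fun a h =>
    hI _ _ (hadj a) ⟨a.2, h⟩
  let M : SimpleGraph V :=
    { Adj := fun u v => (∃ a : A, u = a.1 ∧ v = f a) ∨ (∃ a : A, v = a.1 ∧ u = f a)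
      symm := ⟨fun u v h => h.symm⟩
      loopless := ⟨by
        rintro u (⟨a, h1, h2⟩ | ⟨a, h1, h2⟩) <;>
          exact (hadj a).ne (h1.symm.trans h2)⟩ }
  have hM : M ≤ H := by
    rintro u v (⟨a, rfl, rfl⟩ | ⟨a, rfl, rfl⟩)
    · exact hadj a
    · exact (hadj a).symm
  have hM1 : ∀ v, (M.neighborSet v).ncard ≤ 1 := by
    intro v
    rw [Set.ncard_le_one_iff]
    rintro x y (⟨a, h1, h2⟩ | ⟨a, h1, h2⟩) (⟨b, h3, h4⟩ | ⟨b, h3, h4⟩)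
    · rw [h2, h4, Subtype.ext (h1.symm.trans h3)]
    · exact absurd (h4 ▸ h1 ▸ a.2) (hnot b)
    · exact absurd (h2 ▸ h3 ▸ b.2) (hnot a)
    · rw [h1, h3, hf (h2.symm.trans h4)]
  refine ⟨H \ M, sdiff_le, fun v => ?_⟩
  have h1 := ncard_sdiff hM v
  have h2 := hH v
  have h3 := hM1 v
  by_cases hv : (H.neighborSet v).ncard = k + 2
  · have : 0 < (M.neighborSet v).ncard :=
      (Set.ncard_pos).2 ⟨f ⟨v, hv⟩, Or.inl ⟨⟨v, hv⟩, rfl, rfl⟩⟩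
    omega
  · omega

/-- Each step of the induction thins `G` and then deletes a matching of the top-degree vertices. -/
lemma exists_factor (k : ℕ) : ∀ G : SimpleGraph V, NearReg G (k + 2) →
    ∃ H ≤ G, NearReg H 2 ∧ DegIndep H 3 := by
  induction k with
  | zero => exact fun G hG => exists_thin G 2 hG
  | succ k ih =>
    intro G hG
    obtain ⟨H, hHG, hH, hI⟩ := exists_thin G _ hG
    obtain ⟨H', hH', hN⟩ := exists_lower H (k + 2) hH hI
    obtain ⟨K, hK, h⟩ := ih H' hN
    exact ⟨K, hK.trans (hH'.trans hHG), h⟩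

lemma isPIndepSet_edges (G H : SimpleGraph V) (hH : NearReg H 2) (hI : DegIndep H 3) :
    G.lineGraph.IsPIndepSet 3 {e : G.edgeSet | e.1 ∈ H.edgeSet} := by
  rintro ⟨e, heG⟩ he
  induction e using Sym2.ind with
  | _ u v =>
  have huv : H.Adj u v := he
  rw [← Set.ncard_image_of_injective _ Subtype.val_injective]
  have hsub : Subtype.val '' ({e : G.edgeSet | e.1 ∈ H.edgeSet} ∩
      G.lineGraph.neighborSet ⟨s(u, v), heG⟩) ⊆
      (fun w => s(u, w)) '' (H.neighborSet u \ {v}) ∪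
      (fun w => s(v, w)) '' (H.neighborSet v \ {u}) := by
    rintro _ ⟨⟨e', he'G⟩, ⟨he', hadj⟩, rfl⟩
    rw [SimpleGraph.mem_neighborSet, SimpleGraph.lineGraph_adj_iff_exists] at hadj
    obtain ⟨hne, x, hx, hx'⟩ := hadj
    obtain ⟨y, rfl⟩ := Sym2.mem_iff_exists.1 hx'
    have hxy : H.Adj x y := he'
    rcases Sym2.mem_iff.1 hx with rfl | rfl
    · refine Or.inl ⟨y, ⟨hxy, ?_⟩, rfl⟩
      rintro rfl
      exact hne rfl
    · refine Or.inr ⟨y, ⟨hxy, ?_⟩, rfl⟩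
      rintro rfl
      exact hne (Subtype.ext Sym2.eq_swap)
  have h1 := Set.ncard_le_ncard hsub (Set.toFinite _)
  have h2 := Set.ncard_union_le ((fun w => s(u, w)) '' (H.neighborSet u \ {v}))
    ((fun w => s(v, w)) '' (H.neighborSet v \ {u}))
  have h3 := Set.ncard_image_le (f := fun w => s(u, w)) (Set.toFinite (H.neighborSet u \ {v}))
  have h4 := Set.ncard_image_le (f := fun w => s(v, w)) (Set.toFinite (H.neighborSet v \ {u}))
  have h5 := Set.ncard_sdiff_singleton_add_one (s := H.neighborSet u) (a := v) huv
  have h6 := Set.ncard_sdiff_singleton_add_one (s := H.neighborSet v) (a := u) huv.symm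
  have h7 := hI u v huv
  have h8 := hH u
  have h9 := hH v
  omega

end ThreeIndep

open ThreeIndep in
/-- if `G` is `r`-regular with `r ≥ 2` and has order `n`, then
`α₃(L(G)) ≥ n`. -/
theorem three_indepNum_lineGraph_ge_card {V : Type*} [Fintype V] (G : SimpleGraph V)
    (r : ℕ) (hr : 2 ≤ r) (hreg : G.IsRegularDeg r) :
    Fintype.card V ≤ (G.lineGraph).pIndepNum 3 := by
  -- truncated subtraction is intended: `r = 2` and `r = 3` both start the descent at `{2, 3}`
  obtain ⟨H, hHG, hH, hI⟩ := exists_factor (r - 3) G (fun v => by rw [hreg v]; omega)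
  refine (card_le_ncard_edgeSet H hH).trans (le_csSup ?_ ?_)
  · refine ⟨Nat.card G.edgeSet, ?_⟩
    rintro n ⟨S, -, rfl⟩
    exact Set.ncard_le_card S
  · refine ⟨_, isPIndepSet_edges G H hH hI, ?_⟩
    rw [← Set.ncard_image_of_injective _ Subtype.val_injective]
    congr 1
    ext e
    simpa using fun h => SimpleGraph.edgeSet_mono hHG h
end

section
/- If G is an r-regular finite simple graph with r ≥ 2, and p, q are integers with 0 ≤ p ≤ q ≤ 2, then α_p(G) ≤ α_q(L(G)). -/
/-!
Since `p`-independence weakens as `p` grows, one may take `p = q`, and it suffices to turn a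
`q`-independent vertex set `S` of `G` into a `q`-independent edge set at least as large.

If `q < r`, every `s ∈ S` has at least `r - q` neighbours outside `S`, while every outside vertex
has at most `r` neighbours in `S`. As `(r - q) * (q + 1) ≥ r`, Hall's theorem with every outside
vertex taken `q + 1` times gives each `s ∈ S` an edge to an outside vertex, no outside vertex being
used more than `q + 1` times (`exists_hall_assignment`). The chosen edges are distinct and form
disjoint stars centred outside `S` with at most `q + 1` leaves, so each meets at most `q` others
(`exists_pIndep_lineGraph_of_lt`).

The only remaining case is `q = r = 2`. There `G` is a disjoint union of cycles, so the set of all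
edges is `2`-independent in the line graph and has `|V| ≥ |S|` elements
(`exists_pIndep_lineGraph_of_two_regular`).
-/

open SimpleGraph

namespace SimpleGraph

variable {V W : Type*}

lemma pIndepNum_le_of_forall [Fintype V] [Finite W] {G : SimpleGraph V} {H : SimpleGraph W}
    {p q : ℕ} (h : ∀ S : Set V, G.IsPIndepSet p S →
      ∃ T : Set W, H.IsPIndepSet q T ∧ S.ncard ≤ T.ncard) :
    G.pIndepNum p ≤ H.pIndepNum q := by
  refine csSup_le ⟨0, ∅, by simp [IsPIndepSet], by simp⟩ ?_
  rintro n ⟨S, hS, rfl⟩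
  obtain ⟨T, hT, hle⟩ := h S hS
  refine hle.trans (le_csSup ⟨Nat.card W, ?_⟩ ⟨T, hT, rfl⟩)
  rintro m ⟨U, -, rfl⟩
  exact Set.ncard_le_card U

/-- A capacitated Hall assignment: the second component of `f s` is a slot number, so injectivity
of `f` says that each vertex outside `S` serves at most `q + 1` elements of `S`. -/
lemma exists_hall_assignment [Fintype V] {G : SimpleGraph V} {r q : ℕ}
    (hreg : G.IsRegularDeg r) (hqr : q < r) {S : Set V} (hS : G.IsPIndepSet q S) :
    ∃ f : S → V × Fin (q + 1), Function.Injective f ∧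
      ∀ s : S, G.Adj s (f s).1 ∧ (f s).1 ∉ S := by
  classical
  let t : S → Finset (V × Fin (q + 1)) := fun s =>
    (G.neighborSet s \ S).toFinset ×ˢ Finset.univ
  have hall : ∀ A : Finset S, A.card ≤ (A.biUnion t).card := by
    intro A
    have key : A.card * ((r - q) * (q + 1)) ≤ (A.biUnion t).card * r := by
      apply Finset.card_mul_le_card_mul (fun (s : S) b => b ∈ t s)
      · intro s hs
        have h1 : Finset.bipartiteAbove (fun (s : S) b => b ∈ t s) (A.biUnion t) s = t s := by
          ext b
          simp only [Finset.mem_bipartiteAbove, Finset.mem_biUnion, and_iff_right_iff_imp]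
          exact fun hb => ⟨s, hs, hb⟩
        rw [h1, Finset.card_product, Finset.card_univ, Fintype.card_fin,
          ← Set.ncard_eq_toFinset_card']
        refine Nat.mul_le_mul_right _ ?_
        have h2 := Set.ncard_inter_add_ncard_sdiff_eq_ncard (G.neighborSet s) S
          (Set.toFinite _)
        have h3 := hS s s.2
        rw [Set.inter_comm] at h3
        have h4 := hreg s
        omega
      · intro b _
        rw [← hreg b.1, ← Set.ncard_coe_finset]
        refine Set.ncard_le_ncard_of_injOn Subtype.val ?_ Subtype.val_injective.injOn
        intro s hs
        simp only [Finset.coe_bipartiteBelow, t, Set.mem_ofPred_eq, Finset.mem_product,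
          Set.mem_toFinset] at hs
        exact hs.2.1.1.symm
    have hr : r ≤ (r - q) * (q + 1) := by
      obtain ⟨d, rfl⟩ := Nat.exists_eq_add_of_lt hqr
      rw [show q + d + 1 - q = d + 1 by omega]
      nlinarith [Nat.zero_le (d * q)]
    exact Nat.le_of_mul_le_mul_right ((Nat.mul_le_mul_left _ hr).trans key) (by omega)
  obtain ⟨f, hf, hft⟩ := (Finset.all_card_le_biUnion_card_iff_exists_injective t).1 hall
  refine ⟨f, hf, fun s => ?_⟩
  simpa [t] using hft s

lemma exists_pIndep_lineGraph_of_lt [Fintype V] {G : SimpleGraph V} {r q : ℕ}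
    (hreg : G.IsRegularDeg r) (hqr : q < r) {S : Set V} (hS : G.IsPIndepSet q S) :
    ∃ T : Set G.edgeSet, G.lineGraph.IsPIndepSet q T ∧ S.ncard ≤ T.ncard := by
  classical
  obtain ⟨f, hf, hfS⟩ := exists_hall_assignment hreg hqr hS
  let e : S → G.edgeSet := fun s => ⟨s(s.1, (f s).1), (hfS s).1⟩
  have he : Function.Injective e := by
    intro s s' h
    have h' : s(s.1, (f s).1) = s(s'.1, (f s').1) := congrArg Subtype.val h
    rcases Sym2.eq_iff.1 h' with h1 | h1
    · exact Subtype.ext h1.1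
    · exact ((hfS s').2 (h1.1 ▸ s.2)).elim
  refine ⟨Set.range e, ?_, ?_⟩
  · rintro _ ⟨s, rfl⟩
    -- The chosen edges meeting `e s` share its outside endpoint, hence occupy its other `q` slots.
    have hsub : Set.range e ∩ G.lineGraph.neighborSet (e s) ⊆
        e '' {s' | s' ≠ s ∧ (f s').1 = (f s).1} := by
      rintro _ ⟨⟨s', rfl⟩, hadj⟩
      obtain ⟨hne, v, hv, hv'⟩ := hadj
      refine ⟨s', ⟨fun h => hne (h ▸ rfl), ?_⟩, rfl⟩
      have hv1 : v = s.1 ∨ v = (f s).1 := Sym2.mem_iff.1 hv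
      have hv2 : v = s'.1 ∨ v = (f s').1 := Sym2.mem_iff.1 hv'
      rcases hv1 with h1 | h1 <;> rcases hv2 with h2 | h2
      · exact (hne (congrArg e (Subtype.ext (h1.symm.trans h2)))).elim
      · exact ((hfS s').2 (h2 ▸ h1 ▸ s.2)).elim
      · exact ((hfS s).2 (h1 ▸ h2 ▸ s'.2)).elim
      · exact h2.symm.trans h1
    refine (Set.ncard_le_ncard hsub (Set.toFinite _)).trans ?_
    refine (Set.ncard_image_le (Set.toFinite _)).trans ?_
    have hslots : ({(f s).2}ᶜ : Set (Fin (q + 1))).ncard = q := by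
      rw [Set.ncard_compl]; simp
    conv_rhs => rw [← hslots]
    refine Set.ncard_le_ncard_of_injOn (fun s' => (f s').2) ?_ ?_
    · rintro s' ⟨hne, h1⟩ h2
      exact hne (hf (Prod.ext h1 h2))
    · rintro a ⟨-, ha⟩ b ⟨-, hb⟩ h
      exact hf (Prod.ext (ha.trans hb.symm) h)
  · rw [← Set.image_univ, Set.ncard_image_of_injective _ he, Set.ncard_univ]
    rfl

lemma exists_pIndep_lineGraph_of_two_regular [Fintype V] {G : SimpleGraph V}
    (hreg : G.IsRegularDeg 2) (S : Set V) :
    ∃ T : Set G.edgeSet, G.lineGraph.IsPIndepSet 2 T ∧ S.ncard ≤ T.ncard := by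
  classical
  have hdeg : ∀ v, G.degree v = 2 := fun v => by
    rw [← hreg v, Set.ncard_eq_toFinset_card']; rfl
  refine ⟨Set.univ, ?_, ?_⟩
  · rintro ⟨e, he⟩ -
    induction e using Sym2.ind with | _ a b => ?_
    have hone : ∀ v, s(a, b) ∈ G.incidenceSet v → (G.incidenceSet v \ {s(a, b)}).ncard = 1 := by
      intro v hv
      rw [Set.ncard_sdiff_singleton_of_mem hv, Set.ncard_eq_toFinset_card', Set.toFinset_card,
        card_incidenceSet_eq_degree, hdeg]
    have hcard := Set.ncard_union_le (G.incidenceSet a \ {s(a, b)}) (G.incidenceSet b \ {s(a, b)})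
    rw [hone a ⟨he, by simp⟩, hone b ⟨he, by simp⟩] at hcard
    refine le_trans ?_ hcard
    refine Set.ncard_le_ncard_of_injOn Subtype.val ?_ Subtype.val_injective.injOn
    rintro ⟨e', he'⟩ ⟨-, hne, v, hv, hv'⟩
    have hne' : e' ≠ s(a, b) := fun h => hne (Subtype.ext h.symm)
    rcases Sym2.mem_iff.1 hv with rfl | rfl
    · exact Or.inl ⟨⟨he', hv'⟩, hne'⟩
    · exact Or.inr ⟨⟨he', hv'⟩, hne'⟩
  · have hsum := G.sum_degrees_eq_twice_card_edges
    simp only [hdeg, Finset.sum_const, Finset.card_univ, smul_eq_mul] at hsum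
    have hS := Set.ncard_le_card S
    rw [Set.ncard_univ, Nat.card_eq_fintype_card, ← edgeFinset_card]
    rw [Nat.card_eq_fintype_card] at hS
    omega

end SimpleGraph

/-- if `G` is `r`-regular with `r ≥ 2` and `0 ≤ p ≤ q ≤ 2`, then
`α_p(G) ≤ α_q(L(G))`. -/
theorem valid_triple_p_le_q_le_two {V : Type*} [Fintype V] (G : SimpleGraph V) (r : ℕ)
    (hr : 2 ≤ r) (hreg : G.IsRegularDeg r) (p q : ℕ) (hpq : p ≤ q) (hq : q ≤ 2) :
    G.pIndepNum p ≤ (G.lineGraph).pIndepNum q := by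
  refine pIndepNum_le_of_forall fun S hS => ?_
  have hSq : G.IsPIndepSet q S := fun v hv => (hS v hv).trans hpq
  rcases (hq.trans hr).lt_or_eq with h | h
  · exact exists_pIndep_lineGraph_of_lt hreg h hSq
  · obtain rfl : q = 2 := by omega
    subst h
    exact exists_pIndep_lineGraph_of_two_regular hreg S
end

section
/- If G is an r-regular finite simple graph with r ≥ 2 and p is any non-negative integer, then α_p(G) ≤ α_p(L(G)); that is, the p-independence number of G is at most the maximum size of a set M of edges of G such that every edge in M shares an endpoint with at most p other edges of M. -/
/-!
A subgraph `H ≤ G` in which `deg u + deg v ≤ p + 2` for every edge `uv` has a `p`-independent edge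
set in the line graph (`card_edgeFinset_le_pIndepNum_lineGraph`), so it is enough to find such an
`H` with at least as many edges as a given `p`-independent set `S` has vertices.

For `p ≥ 3` there is such an `H` with at least `#V` edges. An `r`-regular graph has a spanning
subgraph with all degrees in `{2, 3}`: degrees in `{k + 1, k + 2}` can be lowered to `{k, k + 1}`
by deleting edges until the vertices of top degree are independent, and then deleting a matching
that covers them (`exists_factor_step`). In the last graph the vertices of degree three can again
be made independent, so the end-degrees of every edge sum to at most five.

For `p ≤ 2`, `H` consists of the edges of `G[S]` and a matching between `S` and its complement.
Let `D₀`, `D₁` be the sets of vertices of degree zero and one in `G[S]`. Group the vertices of `D₁`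
into pairs. A vertex of `D₀` sends `r` edges out of `S`, and a pair sends `2(r - 1) ≥ r`. Every
vertex has degree `r`, so by Hall's theorem the blocks (single vertices of `D₀`, pairs of `D₁`) can
be matched into the complement of `S` (`exists_matching_of_blocks`). Adding this matching gives
`e(G[S]) + #D₀ + #D₁ / 2 ≥ #S` edges (`exists_subgraph_of_pairs`). For `p ≤ 1` the pairs are
the edges of `G[S]`, so `H` consists of paths with at most two edges; for `p = 2` any pairing
works and `H` has maximum degree at most two.
-/

open SimpleGraph

/-! ### Independent sets of the line graph as subgraphs -/

open Finset in
open scoped Classical in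
/-- An edge `uv` of `H` meets exactly `deg u + deg v - 2` other edges of `H`, so under the bound on
end-degrees the edge set of `H` is a `p`-independent set of the line graph. -/
theorem card_edgeFinset_le_pIndepNum_lineGraph {V : Type*} [Fintype V] {G H : SimpleGraph V}
    {p : ℕ} (hle : H ≤ G) (hH : ∀ u v, H.Adj u v → H.degree u + H.degree v ≤ p + 2) :
    #H.edgeFinset ≤ (G.lineGraph).pIndepNum p := by
  refine le_csSup ⟨Fintype.card G.edgeSet, ?_⟩ ⟨{e | e.1 ∈ H.edgeSet}, ?_, ?_⟩
  · rintro n ⟨S, -, rfl⟩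
    rw [← Nat.card_eq_fintype_card]
    exact Set.ncard_le_card S
  · rintro ⟨e, he⟩ heH
    induction e using Sym2.ind with | _ u v =>
    have huv : H.Adj u v := by simpa using heH
    have hsub : Subtype.val '' ({e : G.edgeSet | e.1 ∈ H.edgeSet} ∩
        G.lineGraph.neighborSet ⟨s(u, v), he⟩) ⊆
        (((H.incidenceFinset u).erase s(u, v) ∪ (H.incidenceFinset v).erase s(u, v) :
          Finset (Sym2 V)) : Set (Sym2 V)) := by
      rintro _ ⟨⟨f, hf⟩, ⟨hfH, hadj⟩, rfl⟩
      rw [SimpleGraph.mem_neighborSet, lineGraph_adj_iff_exists] at hadj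
      obtain ⟨hne, w, hw, hwf⟩ := hadj
      have hne' : f ≠ s(u, v) := fun h => hne (Subtype.ext h.symm)
      have hfH' : f ∈ H.edgeSet := hfH
      simp only [Sym2.mem_iff] at hw
      rcases hw with rfl | rfl <;>
        simp [incidenceSet, hne', hfH', hwf]
    have h1 := Set.ncard_le_ncard hsub (Finset.finite_toSet _)
    rw [Set.ncard_image_of_injective _ Subtype.val_injective, Set.ncard_coe_finset] at h1
    have h2 := card_union_le ((H.incidenceFinset u).erase s(u, v))
      ((H.incidenceFinset v).erase s(u, v))
    rw [card_erase_of_mem (by simp [mem_incidenceFinset, incidenceSet, huv]),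
      card_erase_of_mem (by simp [mem_incidenceFinset, incidenceSet, huv]),
      card_incidenceFinset_eq_degree, card_incidenceFinset_eq_degree] at h2
    have := hH u v huv
    have := huv.degree_pos_left
    have := huv.degree_pos_right
    omega
  · rw [← Set.ncard_image_of_injective _ Subtype.val_injective, ← Set.ncard_coe_finset]
    congr 1
    ext e
    simp only [Set.mem_image, Set.mem_ofPred_eq, Subtype.exists, exists_and_left, exists_prop,
      exists_eq_right_right, coe_edgeFinset]
    exact ⟨fun h => h.1, fun h => ⟨h, edgeSet_mono hle h⟩⟩

/-! ### Matching blocks of vertices -/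

open Finset in
open scoped Classical in
/-- Hall's theorem by double counting: disjoint blocks sending at least `r` edges each into a set
`T` of vertices of degree at most `r` can be matched into `T`. -/
theorem exists_matching_of_blocks {V ι : Type*} [Fintype V] (H : SimpleGraph V) {r : ℕ}
    (hr : 0 < r) (T : Finset V) (hT : ∀ t ∈ T, H.degree t ≤ r) (c : ι → Finset V)
    (hdisj : ∀ i j v, v ∈ c i → v ∈ c j → i = j)
    (hc : ∀ i, r ≤ ∑ v ∈ c i, #(H.neighborFinset v ∩ T)) :
    ∃ f g : ι → V, f.Injective ∧ ∀ i, f i ∈ T ∧ g i ∈ c i ∧ H.Adj (g i) (f i) := by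
  obtain ⟨f, hf, hfm⟩ := (Finset.all_card_le_biUnion_card_iff_exists_injective
    (fun i => (c i).biUnion fun v => H.neighborFinset v ∩ T)).1 (by
      intro A
      set N := A.biUnion fun i => (c i).biUnion fun v => H.neighborFinset v ∩ T with hN
      have hNT : N ⊆ T := by
        intro t ht
        simp only [hN, mem_biUnion, mem_inter] at ht
        obtain ⟨_, _, _, _, _, h⟩ := ht
        exact h
      have h1 : #A * r ≤ ∑ v ∈ A.biUnion c, #(H.neighborFinset v ∩ T) := by
        rw [sum_biUnion (fun i _ j _ hij => Finset.disjoint_left.2 fun v hi hj => hij (hdisj i j v hi hj)),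
          ← smul_eq_mul]
        exact card_nsmul_le_sum _ _ _ fun i _ => hc i
      have h2 : ∑ v ∈ A.biUnion c, #(H.neighborFinset v ∩ T) ≤
          ∑ v ∈ A.biUnion c, #(bipartiteAbove H.Adj N v) := by
        refine sum_le_sum fun v hv => card_le_card fun t ht => ?_
        obtain ⟨i, hi, hvi⟩ := mem_biUnion.1 hv
        simp only [mem_inter, mem_neighborFinset] at ht
        simp only [mem_bipartiteAbove, hN, mem_biUnion, mem_inter, mem_neighborFinset]
        exact ⟨⟨i, hi, v, hvi, ht⟩, ht.1⟩
      have h3 : ∑ t ∈ N, #(bipartiteBelow H.Adj (A.biUnion c) t) ≤ #N * r := by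
        rw [← smul_eq_mul]
        refine sum_le_card_nsmul _ _ _ fun t ht => le_trans (card_le_card ?_) (hT t (hNT ht))
        intro v hv
        simpa [H.adj_comm] using ((mem_bipartiteBelow _).1 hv).2
      rw [sum_card_bipartiteAbove_eq_sum_card_bipartiteBelow] at h2
      exact Nat.le_of_mul_le_mul_right (h1.trans (h2.trans h3)) hr)
  have h : ∀ i, ∃ v ∈ c i, f i ∈ T ∧ H.Adj v (f i) := by
    intro i
    have := hfm i
    simp only [mem_biUnion, mem_inter, mem_neighborFinset] at this
    obtain ⟨v, h1, h2, h3⟩ := this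
    exact ⟨v, h1, h3, h2⟩
  choose g hg using h
  exact ⟨f, g, hf, fun i => ⟨(hg i).2.1, (hg i).1, (hg i).2.2⟩⟩

/-! ### Adding a matching to an induced subgraph -/

/-- The subgraph of `G` formed by the edges inside `S` and the edges joining `g i` to `f i`.
Pairs `g i`, `f i` that are not adjacent in `G` are ignored. -/
def augmented {V ι : Type*} (G : SimpleGraph V) (S : Finset V) (f g : ι → V) : SimpleGraph V where
  Adj u v := G.Adj u v ∧
    ((u ∈ S ∧ v ∈ S) ∨ (∃ i, g i = u ∧ f i = v) ∨ (∃ i, f i = u ∧ g i = v))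
  symm := ⟨by
    rintro u v ⟨h, h'⟩
    refine ⟨h.symm, ?_⟩
    rcases h' with h' | ⟨i, h⟩ | ⟨i, h⟩
    · exact Or.inl h'.symm
    · exact Or.inr (Or.inr ⟨i, h.symm⟩)
    · exact Or.inr (Or.inl ⟨i, h.symm⟩)⟩
  loopless := ⟨fun v h => G.loopless.irrefl v h.1⟩

theorem augmented_adj {V ι : Type*} (G : SimpleGraph V) (S : Finset V) (f g : ι → V) (u v : V) :
    (augmented G S f g).Adj u v ↔ G.Adj u v ∧
      ((u ∈ S ∧ v ∈ S) ∨ (∃ i, g i = u ∧ f i = v) ∨ (∃ i, f i = u ∧ g i = v)) := Iff.rfl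

open Finset in
open scoped Classical in
theorem degree_augmented {V ι : Type*} [Fintype V] [Fintype ι] (G : SimpleGraph V) (S : Finset V)
    (f g : ι → V) (hf : f.Injective) (hg : g.Injective) (hfS : ∀ i, f i ∉ S) (hgS : ∀ i, g i ∈ S)
    (hadj : ∀ i, G.Adj (g i) (f i)) (v : V) :
    (augmented G S f g).degree v =
      (if v ∈ S then #(G.neighborFinset v ∩ S) else 0) + #{i | g i = v} + #{i | f i = v} := by
  have h : (augmented G S f g).neighborFinset v =
      (if v ∈ S then G.neighborFinset v ∩ S else ∅) ∪ ({i | g i = v} : Finset ι).image f ∪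
        ({i | f i = v} : Finset ι).image g := by
    ext w
    have h1 : ∀ i, g i = v → f i = w → G.Adj v w := by rintro i rfl rfl; exact hadj i
    have h2 : ∀ i, f i = v → g i = w → G.Adj v w := by rintro i rfl rfl; exact (hadj i).symm
    by_cases hv : v ∈ S <;>
      simp only [mem_neighborFinset, augmented_adj, mem_union, mem_inter, mem_image, mem_filter,
        mem_univ, true_and, hv, if_true, if_false, notMem_empty] <;> grind
  rw [← card_neighborFinset_eq_degree, h, card_union_of_disjoint, card_union_of_disjoint,
    card_image_of_injective _ hf, card_image_of_injective _ hg]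
  · split_ifs <;> simp
  · rw [Finset.disjoint_left]
    intro w
    split_ifs <;> simp <;> grind
  · rw [Finset.disjoint_left]
    intro w
    split_ifs <;> simp <;> grind

open Finset in
open scoped Classical in
/-- The handshake lemma in `augmented G S f g`; for empty `ι` this is the handshake lemma
in `G[S]`. -/
theorem two_mul_card_edgeFinset_augmented {V ι : Type*} [Fintype V] [Fintype ι]
    (G : SimpleGraph V) (S : Finset V)
    (f g : ι → V) (hf : f.Injective) (hg : g.Injective) (hfS : ∀ i, f i ∉ S) (hgS : ∀ i, g i ∈ S)
    (hadj : ∀ i, G.Adj (g i) (f i)) :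
    2 * #(augmented G S f g).edgeFinset =
      ∑ v ∈ S, #(G.neighborFinset v ∩ S) + 2 * Fintype.card ι := by
  rw [← sum_degrees_eq_twice_card_edges]
  simp_rw [degree_augmented G S f g hf hg hfS hgS hadj, sum_add_distrib]
  rw [← card_eq_sum_card_fiberwise (s := (univ : Finset ι)) (f := g) (t := univ) (by simp),
    ← card_eq_sum_card_fiberwise (s := (univ : Finset ι)) (f := f) (t := univ) (by simp)]
  simp only [sum_ite_mem, univ_inter, card_univ]
  omega

open Finset in
open scoped Classical in
/-- Let `S` be a set in an `r`-regular graph and let `P` partition the vertices of `S` with exactly one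
neighbor in `S` into pairs. The blocks formed by these pairs and by the isolated vertices of `G[S]`
each send at least `r` edges out of `S`. Matching the blocks out of `S` and adding the matching
to `G[S]` gives a subgraph `H` with at least `#S` edges; `B` is the set of vertices of `S`
covered by the matching. -/
theorem exists_subgraph_of_pairs {V : Type*} [Fintype V] (G : SimpleGraph V) {r : ℕ} (hr : 2 ≤ r)
    (hreg : ∀ v, G.degree v = r) (S : Finset V) (P : Finset (Finset V))
    (hP : ∀ c ∈ P, #c = 2 ∧ ∀ v ∈ c, v ∈ S ∧ #(G.neighborFinset v ∩ S) = 1)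
    (hPd : ∀ c ∈ P, ∀ d ∈ P, ∀ v ∈ c, v ∈ d → c = d)
    (hPc : #{v ∈ S | #(G.neighborFinset v ∩ S) = 1} ≤ 2 * #P) :
    ∃ (H : SimpleGraph V) (B : Finset V), H ≤ G ∧ #S ≤ #H.edgeFinset ∧
      (∀ u v, H.Adj u v → u ∉ S → v ∈ S) ∧
      (∀ v ∉ S, H.degree v ≤ 1) ∧
      (∀ v ∈ S, H.degree v ≤ #(G.neighborFinset v ∩ S) + if v ∈ B then 1 else 0) ∧
      (∀ v ∈ B, #(G.neighborFinset v ∩ S) ≤ 1) ∧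
      (∀ c ∈ P, ∀ u ∈ c, ∀ v ∈ c, u ∈ B → v ∈ B → u = v) := by
  set D : Finset V := {v ∈ S | #(G.neighborFinset v ∩ S) = 0} with hD
  have hDm : ∀ v, v ∈ D ↔ v ∈ S ∧ #(G.neighborFinset v ∩ S) = 0 := by
    intro v; rw [hD, mem_filter]
  let c : (D ⊕ P) → Finset V := Sum.elim (fun v => {v.1}) (fun e => e.1)
  have hcS : ∀ i, ∀ v ∈ c i, v ∈ S ∧ #(G.neighborFinset v ∩ S) ≤ 1 := by
    rintro (⟨w, hw⟩ | ⟨e, he⟩) v hv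
    · have : v = w := by simpa [c] using hv
      subst this
      have := (hDm v).1 hw
      exact ⟨this.1, by omega⟩
    · have := (hP e he).2 v hv
      exact ⟨this.1, this.2.le⟩
  have hcd : ∀ i j v, v ∈ c i → v ∈ c j → i = j := by
    rintro (⟨w, hw⟩ | ⟨e, he⟩) (⟨w', hw'⟩ | ⟨e', he'⟩) v hi hj
    · have h1 : v = w := by simpa [c] using hi
      have h2 : v = w' := by simpa [c] using hj
      subst h1; subst h2; rfl
    · have h1 : v = w := by simpa [c] using hi
      have h2 := (hP e' he').2 v hj
      have h3 := (hDm w).1 hw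
      subst h1; omega
    · have h1 : v = w' := by simpa [c] using hj
      have h2 := (hP e he).2 v hi
      have h3 := (hDm w').1 hw'
      subst h1; omega
    · have := hPd e he e' he' v hi hj
      subst this; rfl
  have hsplit : ∀ v, #(G.neighborFinset v ∩ S) + #(G.neighborFinset v ∩ Sᶜ) = r := by
    intro v
    rw [← hreg v, ← card_neighborFinset_eq_degree,
      ← card_union_of_disjoint
        (disjoint_compl_right.mono inter_subset_right inter_subset_right),
      ← inter_union_distrib_left, union_compl, inter_univ]
  have hcr : ∀ i, r ≤ ∑ v ∈ c i, #(G.neighborFinset v ∩ Sᶜ) := by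
    rintro (⟨w, hw⟩ | ⟨e, he⟩)
    · have h1 := hsplit w
      have h3 := (hDm w).1 hw
      simp only [c, Sum.elim_inl, sum_singleton]
      omega
    · have h : ∑ v ∈ e, #(G.neighborFinset v ∩ Sᶜ) = ∑ v ∈ e, (r - 1) := by
        refine sum_congr rfl fun v hv => ?_
        have h1 := hsplit v
        have h2 := (hP e he).2 v hv
        omega
      simp only [c, Sum.elim_inr, h, sum_const, (hP e he).1, smul_eq_mul]
      omega
  obtain ⟨f, g, hf, hfg⟩ := exists_matching_of_blocks G (by omega) Sᶜ
    (fun t _ => (hreg t).le) c hcd hcr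
  have hg : g.Injective := fun i j hij =>
    hcd i j (g i) (hfg i).2.1 (by rw [hij]; exact (hfg j).2.1)
  have hfS : ∀ i, f i ∉ S := fun i => mem_compl.1 (hfg i).1
  have hgS : ∀ i, g i ∈ S := fun i => (hcS i _ (hfg i).2.1).1
  have hadj := fun i => (hfg i).2.2
  have hdeg := degree_augmented G S f g hf hg hfS hgS hadj
  have hone : ∀ (k : D ⊕ P → V), k.Injective → ∀ v, #{i | k i = v} ≤ 1 := by
    intro k hk v
    refine card_le_one.2 fun i hi j hj => hk ?_
    rw [(mem_filter.1 hi).2, (mem_filter.1 hj).2]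
  refine ⟨augmented G S f g, univ.image g, fun u v h => h.1, ?_, ?_, ?_, ?_, ?_, ?_⟩
  · have h1 := two_mul_card_edgeFinset_augmented G S f g hf hg hfS hgS hadj
    rw [Fintype.card_sum, Fintype.card_coe, Fintype.card_coe] at h1
    -- Each vertex of `S` contributes at least two to the right-hand side.
    have h2 : 2 * #S ≤ ∑ v ∈ S, #(G.neighborFinset v ∩ S) + 2 * #D +
        #{v ∈ S | #(G.neighborFinset v ∩ S) = 1} := by
      rw [hD, card_filter, card_filter, mul_sum, ← sum_add_distrib, ← sum_add_distrib, mul_comm,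
        ← smul_eq_mul]
      refine card_nsmul_le_sum _ _ _ fun v _ => ?_
      split_ifs <;> omega
    omega
  · rintro u v ⟨-, h | ⟨i, h, -⟩ | ⟨i, -, h⟩⟩ hu
    · exact h.2
    · exact absurd (h ▸ hgS i) hu
    · exact h ▸ hgS i
  · intro v hv
    have h0 : #{i | g i = v} = 0 := by
      rw [card_eq_zero, filter_eq_empty_iff]
      rintro i - rfl
      exact hv (hgS i)
    rw [hdeg, if_neg hv, h0]
    have := hone f hf v
    omega
  · intro v hv
    have h0 : #{i | f i = v} = 0 := by
      rw [card_eq_zero, filter_eq_empty_iff]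
      rintro i - rfl
      exact hfS i hv
    rw [hdeg, if_pos hv, h0]
    split_ifs with hB
    · have := hone g hg v
      omega
    · have : #{i | g i = v} = 0 := by
        rw [card_eq_zero, filter_eq_empty_iff]
        rintro i - rfl
        exact hB (mem_image_of_mem g (mem_univ i))
      omega
  · intro v hv
    obtain ⟨i, -, rfl⟩ := mem_image.1 hv
    exact (hcS i _ (hfg i).2.1).2
  · intro e he u hu v hv huB hvB
    obtain ⟨i, -, rfl⟩ := mem_image.1 huB
    obtain ⟨j, -, rfl⟩ := mem_image.1 hvB
    rw [hcd i (Sum.inr ⟨e, he⟩) _ (hfg i).2.1 hu, hcd j (Sum.inr ⟨e, he⟩) _ (hfg j).2.1 hv]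

/-! ### The cases `p ≤ 2` -/

open Finset in
open scoped Classical in
theorem card_le_of_le_one {V : Type*} [Fintype V] (G : SimpleGraph V) {r : ℕ} (hr : 2 ≤ r)
    (hreg : ∀ v, G.degree v = r) {p : ℕ} (hp : p ≤ 1) (S : Finset V)
    (hS : ∀ v ∈ S, #(G.neighborFinset v ∩ S) ≤ p) :
    #S ≤ (G.lineGraph).pIndepNum p := by
  have huniq : ∀ u ∈ S, ∀ v ∈ S, ∀ w ∈ S, G.Adj u v → G.Adj u w → v = w := by
    intro u hu v hv w hw huv huw
    exact card_le_one.1 ((hS u hu).trans hp) v (by simp [huv, hv]) w (by simp [huw, hw])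
  -- The pairs are the edges of `G[S]`, so that at most one new edge is attached to each edge
  -- inside `S`.
  set P : Finset (Finset V) := {c | ∃ u ∈ S, ∃ v ∈ S, G.Adj u v ∧ c = {u, v}} with hPdef
  have hPm : ∀ c, c ∈ P ↔ ∃ u ∈ S, ∃ v ∈ S, G.Adj u v ∧ c = {u, v} := by simp [hPdef]
  have hdeg1 : ∀ u ∈ S, ∀ v ∈ S, G.Adj u v → #(G.neighborFinset u ∩ S) = 1 := by
    intro u hu v hv huv
    have : 0 < #(G.neighborFinset u ∩ S) := card_pos.2 ⟨v, by simp [huv, hv]⟩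
    have := hS u hu
    omega
  obtain ⟨H, B, hHG, hcard, hST, hdT, hdS, hB, hBP⟩ :=
    exists_subgraph_of_pairs G hr hreg S P (by
      intro c hc
      obtain ⟨u, hu, v, hv, huv, rfl⟩ := (hPm c).1 hc
      refine ⟨card_pair huv.ne, fun w hw => ?_⟩
      rcases (by simpa using hw : w = u ∨ w = v) with rfl | rfl
      · exact ⟨hu, hdeg1 _ hu _ hv huv⟩
      · exact ⟨hv, hdeg1 _ hv _ hu huv.symm⟩) (by
      intro c hc d hd x hxc hxd
      obtain ⟨u, hu, v, hv, huv, rfl⟩ := (hPm c).1 hc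
      obtain ⟨u', hu', v', hv', huv', rfl⟩ := (hPm d).1 hd
      rcases (by simpa using hxc : x = u ∨ x = v) with rfl | rfl <;>
      rcases (by simpa using hxd : x = u' ∨ x = v') with rfl | rfl
      · rw [huniq _ hu _ hv _ hv' huv huv']
      · rw [huniq _ hu _ hv _ hu' huv huv'.symm, pair_comm]
      · rw [huniq _ hv _ hu _ hv' huv.symm huv', pair_comm]
      · rw [huniq _ hv _ hu _ hu' huv.symm huv'.symm]) (by
      have h1 : ({v ∈ S | #(G.neighborFinset v ∩ S) = 1} : Finset V) ⊆ P.biUnion id := by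
        intro v hv
        obtain ⟨hvS, hv1⟩ := mem_filter.1 hv
        obtain ⟨w, hw⟩ := card_pos.1 (by omega : 0 < #(G.neighborFinset v ∩ S))
        simp only [mem_inter, mem_neighborFinset] at hw
        exact mem_biUnion.2 ⟨{v, w}, (hPm _).2 ⟨v, hvS, w, hw.2, hw.1, rfl⟩, by simp⟩
      refine (card_le_card h1).trans ?_
      rw [mul_comm]
      refine card_biUnion_le_card_mul _ _ _ fun c hc => ?_
      obtain ⟨u, hu, v, hv, huv, rfl⟩ := (hPm c).1 hc
      exact card_le_two)
  refine hcard.trans (card_edgeFinset_le_pIndepNum_lineGraph hHG fun u v huv => ?_)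
  have hle : ∀ w ∈ S, H.degree w ≤ p + 1 := by
    intro w hw
    have h1 := hdS w hw
    have h2 := hS w hw
    split_ifs at h1 <;> omega
  by_cases hu : u ∈ S
  · by_cases hv : v ∈ S
    · have h1 := hdS u hu
      have h2 := hdS v hv
      have h3 := hdeg1 u hu v hv (hHG huv)
      have h4 := hS u hu
      have h5 := hS v hv
      have h6 : u ∈ B → v ∈ B → False := fun hu' hv' => huv.ne <|
        hBP {u, v} ((hPm _).2 ⟨u, hu, v, hv, hHG huv, rfl⟩) u (by simp) v (by simp) hu' hv'
      split_ifs at h1 h2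
      · exact (h6 ‹_› ‹_›).elim
      all_goals omega
    · have := hle u hu
      have := hdT v hv
      omega
  · have := hle v (hST u v huv hu)
    have := hdT u hu
    omega

open Finset in
/-- A finite set of even size splits into disjoint pairs. -/
theorem exists_pairs {V : Type*} [DecidableEq V] (n : ℕ) : ∀ D : Finset V, #D = 2 * n →
    ∃ P : Finset (Finset V), (∀ c ∈ P, #c = 2 ∧ c ⊆ D) ∧
      (∀ c ∈ P, ∀ d ∈ P, ∀ v ∈ c, v ∈ d → c = d) ∧ #P = n := by
  induction n with
  | zero => exact fun D _ => ⟨∅, by simp⟩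
  | succ n ih =>
    intro D hD
    obtain ⟨c, hcD, hc⟩ := exists_subset_card_eq (by omega : 2 ≤ #D)
    obtain ⟨P, h1, h2, h3⟩ := ih (D \ c) (by rw [card_sdiff_of_subset hcD]; omega)
    have h4 : ∀ d ∈ P, ∀ v ∈ c, v ∉ d := fun d hd v hv hvd =>
      (mem_sdiff.1 ((h1 d hd).2 hvd)).2 hv
    refine ⟨insert c P, ?_, ?_, ?_⟩
    · intro d hd
      rcases mem_insert.1 hd with rfl | hd
      · exact ⟨hc, hcD⟩
      · exact ⟨(h1 d hd).1, (h1 d hd).2.trans sdiff_subset⟩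
    · intro d hd e he v hvd hve
      rcases mem_insert.1 hd with hd | hd <;> rcases mem_insert.1 he with he | he
      · exact hd.trans he.symm
      · exact absurd hve (h4 e he v (hd ▸ hvd))
      · exact absurd hvd (h4 d hd v (he ▸ hve))
      · exact h2 d hd e he v hvd hve
    · rw [card_insert_of_notMem, h3]
      intro hcP
      obtain ⟨v, hv⟩ := card_pos.1 (by omega : 0 < #c)
      exact h4 c hcP v hv hv

open Finset in
open scoped Classical in
theorem card_le_of_two {V : Type*} [Fintype V] (G : SimpleGraph V) {r : ℕ} (hr : 2 ≤ r)
    (hreg : ∀ v, G.degree v = r) (S : Finset V)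
    (hS : ∀ v ∈ S, #(G.neighborFinset v ∩ S) ≤ 2) :
    #S ≤ (G.lineGraph).pIndepNum 2 := by
  -- By the handshake lemma in `G[S]`, the vertices of degree one can be paired up.
  have heven : Even (∑ v ∈ S, #(G.neighborFinset v ∩ S)) := by
    have := two_mul_card_edgeFinset_augmented G S (ι := Empty) Empty.elim Empty.elim
      (fun i => i.elim) (fun i => i.elim) (fun i => i.elim) (fun i => i.elim) (fun i => i.elim)
    rw [Fintype.card_eq_zero, mul_zero, add_zero] at this
    exact this ▸ even_two_mul _
  rw [even_sum_iff_even_card_odd] at heven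
  have hfilt : ({v ∈ S | Odd #(G.neighborFinset v ∩ S)} : Finset V) =
      {v ∈ S | #(G.neighborFinset v ∩ S) = 1} := by
    refine filter_congr fun v hv => ?_
    have := hS v hv
    rw [Nat.odd_iff]
    omega
  rw [hfilt] at heven
  obtain ⟨n, hn⟩ := heven
  obtain ⟨P, h1, h2, h3⟩ := exists_pairs n _ (hn.trans (two_mul n).symm)
  obtain ⟨H, B, hHG, hcard, -, hdT, hdS, hB, -⟩ :=
    exists_subgraph_of_pairs G hr hreg S P
      (fun c hc => ⟨(h1 c hc).1, fun v hv => mem_filter.1 ((h1 c hc).2 hv)⟩) h2 (by omega)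
  refine hcard.trans (card_edgeFinset_le_pIndepNum_lineGraph hHG fun u v _ => ?_)
  have hle : ∀ w, H.degree w ≤ 2 := by
    intro w
    by_cases hw : w ∈ S
    · have h4 := hdS w hw
      have h5 := hS w hw
      have h6 := hB w
      split_ifs at h4 with hwB
      · have := h6 hwB
        omega
      · omega
    · have := hdT w hw
      omega
  have := hle u
  have := hle v
  omega

/-! ### The case `p ≥ 3` -/

open Finset in
open scoped Classical in
/-- Deleting edges between vertices of degree `k + 1` makes these vertices independent. -/
theorem exists_independent_top {V : Type*} [Fintype V] (k : ℕ) (H : SimpleGraph V)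
    (hH : ∀ v, k ≤ H.degree v ∧ H.degree v ≤ k + 1) :
    ∃ H' ≤ H, (∀ v, k ≤ H'.degree v ∧ H'.degree v ≤ k + 1) ∧
      ∀ u v, H'.Adj u v → H'.degree u = k + 1 → H'.degree v ≠ k + 1 := by
  obtain ⟨H', hH', hmin⟩ := (Set.toFinite {K : SimpleGraph V | K ≤ H ∧
    ∀ v, k ≤ K.degree v ∧ K.degree v ≤ k + 1}).exists_minimal ⟨H, le_rfl, hH⟩
  refine ⟨H', hH'.1, hH'.2, fun u v huv hu hv => ?_⟩
  obtain ⟨K, hKadj⟩ : ∃ K : SimpleGraph V, ∀ a b, K.Adj a b ↔ H'.Adj a b ∧ s(a, b) ≠ s(u, v) :=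
    ⟨H'.deleteEdges {s(u, v)}, fun _ _ => by simp⟩
  have hle : K ≤ H' := fun a b h => ((hKadj a b).1 h).1
  have hdeg : ∀ w, k ≤ K.degree w := by
    intro w
    by_cases hw : w = u ∨ w = v
    · obtain ⟨x, hx, hxw⟩ : ∃ x, (H'.neighborFinset w).erase x ⊆
          K.neighborFinset w ∧ H'.degree w = k + 1 := by
        rcases hw with rfl | rfl
        · refine ⟨v, fun y hy => ?_, hu⟩
          simp only [mem_erase, mem_neighborFinset, hKadj] at hy ⊢
          grind
        · refine ⟨u, fun y hy => ?_, hv⟩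
          simp only [mem_erase, mem_neighborFinset, hKadj] at hy ⊢
          grind
      have h1 := card_le_card hx
      have h2 := pred_card_le_card_erase (s := H'.neighborFinset w) (a := x)
      rw [card_neighborFinset_eq_degree] at h1 h2
      omega
    · refine (hH'.2 w).1.trans (card_le_card fun y hy => ?_)
      simp only [mem_neighborFinset, hKadj] at hy ⊢
      grind
  have := hmin ⟨hle.trans hH'.1, fun w =>
    ⟨hdeg w, (degree_le_of_le hle).trans (hH'.2 w).2⟩⟩ hle huv
  simp [hKadj] at this

open Finset in
open scoped Classical in
/-- A graph with all degrees in `{k + 1, k + 2}` has a spanning subgraph with all degrees in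
`{k, k + 1}`: once the vertices of degree `k + 2` are independent, delete a matching that
covers them. -/
theorem exists_factor_step_s14 {V : Type*} [Fintype V] (k : ℕ) (H : SimpleGraph V)
    (hH : ∀ v, k + 1 ≤ H.degree v ∧ H.degree v ≤ k + 2) :
    ∃ H' ≤ H, ∀ v, k ≤ H'.degree v ∧ H'.degree v ≤ k + 1 := by
  obtain ⟨K, hKH, hK, hind⟩ := exists_independent_top (k + 1) H hH
  let W : Finset V := {v | K.degree v = k + 2}
  have hW : ∀ v, v ∈ W ↔ K.degree v = k + 2 := by simp [W]
  obtain ⟨f, g, hf, hfg⟩ := exists_matching_of_blocks K (r := k + 2) (by omega) Wᶜ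
    (fun t _ => (hK t).2) (fun w : W => {w.1}) (by
      intro i j v hi hj
      rw [mem_singleton] at hi hj
      exact Subtype.ext (hi.symm.trans hj)) (by
      rintro ⟨w, hw⟩
      rw [sum_singleton, inter_eq_left.2, card_neighborFinset_eq_degree, (hW w).1 hw]
      intro x hx
      rw [mem_compl, hW]
      exact hind w x (by simpa using hx) ((hW w).1 hw))
  have hgi : ∀ i, g i = i.1 := fun i => mem_singleton.1 (hfg i).2.1
  have hfW : ∀ i, f i ∉ W := fun i => mem_compl.1 (hfg i).1
  set M : Set (Sym2 V) := Set.range fun i => s(g i, f i) with hM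
  have hMm : ∀ a b, s(a, b) ∈ M ↔ ∃ i : W, (i.1 = a ∧ f i = b) ∨ (i.1 = b ∧ f i = a) := by
    intro a b
    simp [hM, hgi]
  obtain ⟨L, hL⟩ : ∃ L : SimpleGraph V, ∀ a b, L.Adj a b ↔ K.Adj a b ∧ s(a, b) ∉ M :=
    ⟨K.deleteEdges M, fun _ _ => deleteEdges_adj⟩
  have hLK : L ≤ K := fun a b h => ((hL a b).1 h).1
  refine ⟨L, hLK.trans hKH, fun v => ?_⟩
  -- The deleted edges form a matching, so each degree drops by at most one.
  have hlow : K.degree v - 1 ≤ L.degree v := by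
    obtain ⟨x, hx⟩ : ∃ x, ∀ y, s(v, y) ∈ M → y = x := by
      by_cases h : ∃ x, s(v, x) ∈ M
      · obtain ⟨x, hx⟩ := h
        refine ⟨x, fun y hy => ?_⟩
        obtain ⟨i, hi⟩ := (hMm _ _).1 hx
        obtain ⟨j, hj⟩ := (hMm _ _).1 hy
        have := hfW i
        have := hfW j
        have := i.2
        have := j.2
        have := @hf i j
        grind
      · exact ⟨v, fun y hy => (h ⟨y, hy⟩).elim⟩
    have hsub : (K.neighborFinset v).erase x ⊆ L.neighborFinset v := by
      intro y hy
      simp only [mem_erase, mem_neighborFinset, hL] at hy ⊢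
      exact ⟨hy.2, fun h => hy.1 (hx y h)⟩
    have h1 := card_le_card hsub
    have h2 := pred_card_le_card_erase (s := K.neighborFinset v) (a := x)
    rw [card_neighborFinset_eq_degree] at h1 h2
    omega
  have hup : L.degree v ≤ K.degree v := degree_le_of_le hLK
  have hKv := hK v
  refine ⟨by omega, ?_⟩
  by_cases hv : v ∈ W
  · have hlt : L.degree v < K.degree v := by
      refine card_lt_card ⟨fun y hy => ?_, fun h => ?_⟩
      · simp only [mem_neighborFinset, hL] at hy ⊢
        exact hy.1
      · have hadj : K.Adj v (f ⟨v, hv⟩) := by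
          have := (hfg ⟨v, hv⟩).2.2
          rwa [hgi] at this
        have := h ((mem_neighborFinset _ _ _).2 hadj)
        simp only [mem_neighborFinset, hL] at this
        exact this.2 ((hMm _ _).2 ⟨⟨v, hv⟩, Or.inl ⟨rfl, rfl⟩⟩)
    omega
  · have : K.degree v ≠ k + 2 := fun h => hv ((hW v).2 h)
    omega

open Finset in
open scoped Classical in
theorem exists_two_three_factor_s14 {V : Type*} [Fintype V] (k : ℕ) : ∀ H : SimpleGraph V,
    (∀ v, k + 2 ≤ H.degree v ∧ H.degree v ≤ k + 3) →
    ∃ H' ≤ H, ∀ v, 2 ≤ H'.degree v ∧ H'.degree v ≤ 3 := by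
  induction k with
  | zero => exact fun H hH => ⟨H, le_rfl, hH⟩
  | succ k ih =>
    intro H hH
    obtain ⟨K, hK, hK'⟩ := exists_factor_step_s14 (k + 2) H (fun v => by have := hH v; omega)
    obtain ⟨L, hL, hL'⟩ := ih K hK'
    exact ⟨L, hL.trans hK, hL'⟩

open Finset in
open scoped Classical in
theorem card_le_of_three_le {V : Type*} [Fintype V] (G : SimpleGraph V) {r : ℕ} (hr : 2 ≤ r)
    (hreg : ∀ v, G.degree v = r) {p : ℕ} (hp : 3 ≤ p) :
    Fintype.card V ≤ (G.lineGraph).pIndepNum p := by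
  obtain ⟨K, hKG, hK⟩ := exists_two_three_factor_s14 (r - 2) G
    (fun v => by have := hreg v; omega)
  obtain ⟨H, hHK, hH, hind⟩ := exists_independent_top 2 K hK
  have hcard : Fintype.card V ≤ #H.edgeFinset := by
    have h1 := sum_degrees_eq_twice_card_edges H
    have h2 := card_nsmul_le_sum univ (fun v => H.degree v) 2 fun v _ => (hH v).1
    rw [smul_eq_mul, card_univ] at h2
    omega
  refine hcard.trans (card_edgeFinset_le_pIndepNum_lineGraph (hHK.trans hKG) fun u v huv => ?_)
  have h1 := hH u
  have h2 := hH v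
  have h3 := hind u v huv
  omega

/-- if `G` is `r`-regular with `r ≥ 2` and `p ≥ 0`, then
`α_p(G) ≤ α_p(L(G))`. -/
theorem pIndepNum_le_pIndepNum_lineGraph {V : Type*} [Fintype V] (G : SimpleGraph V)
    (r : ℕ) (hr : 2 ≤ r) (hreg : G.IsRegularDeg r) (p : ℕ) :
    G.pIndepNum p ≤ (G.lineGraph).pIndepNum p := by
  classical
  have hreg' : ∀ v, G.degree v = r := by
    intro v
    rw [← hreg v, ← card_neighborFinset_eq_degree, ← Set.ncard_coe_finset, coe_neighborFinset]
  refine csSup_le ⟨0, ∅, by simp [SimpleGraph.IsPIndepSet]⟩ ?_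
  rintro n ⟨S, hS, rfl⟩
  have hS' : ∀ v ∈ S.toFinset, (G.neighborFinset v ∩ S.toFinset).card ≤ p := by
    intro v hv
    have := hS v (Set.mem_toFinset.1 hv)
    rwa [← Set.ncard_coe_finset, Finset.coe_inter, coe_neighborFinset, Set.coe_toFinset,
      Set.inter_comm]
  rw [Set.ncard_eq_toFinset_card']
  rcases (by omega : p ≤ 1 ∨ p = 2 ∨ 3 ≤ p) with hp | rfl | hp
  · exact card_le_of_le_one G hr hreg' hp _ hS'
  · exact card_le_of_two G hr hreg' _ hS'
  · exact (Finset.card_le_univ _).trans (card_le_of_three_le G hr hreg' hp)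
end

section
/- Let p ≥ 0 and q ≥ 2 be integers and let r be an odd integer with r ≥ 3 and 16r ≥ 17(p+1). If G is an r-regular finite simple graph, then α_p(G) ≤ α_q(L(G)). -/
/-!
Write `r = 2k - 1` and `n = |V|`. The proof compares both sides with `r n / (r + 1)`.

* Upper bound for `α_p(G)`. Since `p < r`, every vertex of a `p`-independent set `S` has a
  neighbor outside `S`, while every vertex outside `S` has at most `r` neighbors in `S`. Hence
  `|S| ≤ r (n - |S|)` (`pIndep_card_le`).
* Lower bound for `α_q(L(G))`. As `r` is odd, `n` is even, and adding an arbitrary perfect pairing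
  of `V` to the edges of `G` produces a `2k`-regular multigraph. Hall's theorem gives it an
  orientation with all out-degrees (hence all in-degrees) equal to `k`, so `G` has an orientation
  with all in- and out-degrees at most `k` (`exists_orientation`). Viewed as a bipartite graph
  between tails and heads, this orientation has `r n / 2` arcs and maximum degree at most `k`, so by
  Hall's theorem with dummy vertices it has a matching with at least `r n / (2k) = r n / (r + 1)`
  arcs (`exists_partial_injection`). In `G` a matching of arcs is a set of edges forming
  disjoint paths and cycles, so each of its edges meets at most two others.
-/

open SimpleGraph

open Finset in
/-- A `p`-independent set with `p < r` in an `r`-regular graph on `n` vertices has at most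
`r n / (r + 1)` vertices. -/
lemma pIndep_card_le {V : Type*} [Fintype V] [DecidableEq V] (G : SimpleGraph V)
    [DecidableRel G.Adj] (r p : ℕ) (hpr : p < r) (hdeg : ∀ v, G.degree v = r)
    (S : Finset V) (hS : ∀ v ∈ S, #{w ∈ S | G.Adj v w} ≤ p) :
    (r + 1) * #S ≤ r * Fintype.card V := by
  have h1 : ∀ v ∈ S, 1 ≤ #(bipartiteAbove G.Adj Sᶜ v) := by
    intro v hv
    have h2 : #{w ∈ S | G.Adj v w} + #{w ∈ Sᶜ | G.Adj v w} = r := by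
      rw [← hdeg v, ← G.card_neighborFinset_eq_degree, G.neighborFinset_eq_filter,
        ← card_union_of_disjoint (disjoint_filter_filter disjoint_compl_right),
        ← filter_union, union_compl]
    have := hS v hv
    unfold bipartiteAbove
    omega
  have h2 : ∀ w ∈ Sᶜ, #(bipartiteBelow G.Adj S w) ≤ r := by
    intro w _
    rw [← hdeg w, ← G.card_neighborFinset_eq_degree]
    apply card_le_card
    intro x hx
    simp only [bipartiteBelow, mem_filter] at hx
    simpa using hx.2.symm
  have h3 := card_mul_le_card_mul G.Adj h1 h2
  have h4 : #Sᶜ + #S = Fintype.card V := card_compl_add_card S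
  rw [← h4]
  nlinarith

open Finset in
/-- A balanced orientation: a `(2k - 1)`-regular graph can be oriented so that all out-degrees and
all in-degrees are at most `k`. Here `D u v` means that the edge `uv` is directed from `u` to
`v`. -/
lemma exists_orientation {V : Type*} [Fintype V] [DecidableEq V] (G : SimpleGraph V)
    [DecidableRel G.Adj] (k : ℕ) (hdeg : ∀ v, G.degree v + 1 = 2 * k) :
    ∃ D : V → V → Prop, (∀ u v, D u v → G.Adj u v) ∧ (∀ u v, G.Adj u v → D u v ∨ D v u) ∧
      (∀ u v, D u v → ¬ D v u) ∧
      ∀ u, {v | D u v}.ncard ≤ k ∧ {v | D v u}.ncard ≤ k := by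
  classical
  have hsum : Fintype.card V * (2 * k) = 2 * #G.edgeFinset + Fintype.card V := by
    rw [← G.sum_degrees_eq_twice_card_edges, ← smul_eq_mul, ← card_univ, ← sum_const,
      card_eq_sum_ones, ← sum_add_distrib]
    exact sum_congr rfl fun v _ => (hdeg v).symm
  obtain ⟨m, hm⟩ : ∃ m, Fintype.card V = m * 2 := by
    have : Fintype.card V * (2 * k) = 2 * (Fintype.card V * k) := by ring
    exact ⟨Fintype.card V / 2, by omega⟩
  obtain ⟨e⟩ : Nonempty (V ≃ Fin m × Bool) := ⟨Fintype.equivOfCardEq (by simp [hm])⟩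
  -- `Sum.inr i` is the dummy edge joining the `i`-th pair of a fixed perfect pairing of `V`.
  let ends : G.edgeSet ⊕ Fin m → Finset V :=
    Sum.elim (fun x => (x : Sym2 V).toFinset) (fun i => {e.symm (i, true), e.symm (i, false)})
  have hends : ∀ j, #(ends j) = 2 := by
    rintro (⟨x, hx⟩ | i)
    · exact Sym2.card_toFinset_of_not_isDiag x (G.not_isDiag_of_mem_edgeSet hx)
    · exact card_pair (by simp)
  have hinc : ∀ v, #{j | v ∈ ends j} = 2 * k := by
    intro v
    rw [← hdeg v, card_filter, Fintype.sum_sum_type, ← card_filter, ← card_filter]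
    congr 1
    · rw [← G.card_incidenceFinset_eq_degree]
      refine card_bij (fun x _ => (x : Sym2 V)) ?_ ?_ ?_
      · rintro ⟨x, hx⟩ h
        simp only [ends, mem_filter, Sum.elim_inl, Sym2.mem_toFinset] at h
        exact (G.mem_incidenceFinset v x).2 ⟨hx, h.2⟩
      · intro a _ b _ h
        exact Subtype.ext h
      · intro x hx
        rw [G.mem_incidenceFinset] at hx
        exact ⟨⟨x, hx.1⟩, by simpa [ends] using hx.2, rfl⟩
    · rw [card_eq_one]
      refine ⟨(e v).1, ?_⟩
      ext i
      simp only [ends, mem_filter, mem_univ, true_and, Sum.elim_inr, mem_insert, mem_singleton,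
        Equiv.eq_symm_apply]
      rcases h : e v with ⟨a, b⟩
      cases b <;> simp [eq_comm]
  have hcard : Fintype.card (G.edgeSet ⊕ Fin m) = Fintype.card (V × Fin k) := by
    rw [Fintype.card_sum, Fintype.card_prod, Fintype.card_fin, Fintype.card_fin,
      ← G.edgeFinset_card]
    have : Fintype.card V * (2 * k) = 2 * (Fintype.card V * k) := by ring
    omega
  -- Hall's theorem assigns to every edge one of the `k` slots of its tail.
  obtain ⟨f, hf, hft⟩ := (all_card_le_biUnion_card_iff_exists_injective
    (fun j => ends j ×ˢ (univ : Finset (Fin k)))).1 (by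
      intro F
      have h1 : F.biUnion (fun j => ends j ×ˢ (univ : Finset (Fin k)))
          = F.biUnion ends ×ˢ univ := by
        ext ⟨a, b⟩; simp
      rw [h1, card_product, card_univ, Fintype.card_fin]
      have h2 := card_mul_le_card_mul (s := F) (t := F.biUnion ends) (m := 2) (n := 2 * k)
        (fun j v => v ∈ ends j) (by
          intro j hj
          rw [← hends j]
          apply card_le_card
          intro v hv
          simp only [bipartiteAbove, mem_filter, mem_biUnion]
          exact ⟨⟨j, hj, hv⟩, hv⟩) (by
          intro v _
          rw [← hinc v]
          apply card_le_card
          intro j hj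
          simp only [bipartiteBelow, mem_filter] at hj
          simpa using hj.2)
      nlinarith)
  have hbij : Function.Bijective f := (Fintype.bijective_iff_injective_and_card f).2 ⟨hf, hcard⟩
  have htail : ∀ j, (f j).1 ∈ ends j := fun j => by simpa using hft j
  have hout : ∀ v, #{j | (f j).1 = v} = k := by
    intro v
    have : #{j | (f j).1 = v} = #(({v} : Finset V) ×ˢ (univ : Finset (Fin k))) := by
      refine card_bij (fun j _ => f j) ?_ (fun a _ b _ h => hf h) ?_
      · intro j hj
        exact mem_product.2 ⟨mem_singleton.2 (mem_filter.1 hj).2, mem_univ _⟩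
      · intro b hb
        obtain ⟨j, rfl⟩ := hbij.2 b
        exact ⟨j, mem_filter.2 ⟨mem_univ _, mem_singleton.1 (mem_product.1 hb).1⟩, rfl⟩
    simpa using this
  have hin : ∀ v, #{j | v ∈ ends j ∧ (f j).1 ≠ v} = k := by
    intro v
    have h1 := card_filter_add_card_filter_not (s := ({j | v ∈ ends j} : Finset _))
      (fun j => (f j).1 = v)
    simp only [filter_filter, hinc v] at h1
    have h2 : #{j | v ∈ ends j ∧ (f j).1 = v} = k := by
      refine Eq.trans (congrArg _ ?_) (hout v)
      ext j
      simp only [mem_filter, mem_univ, true_and, and_iff_right_iff_imp]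
      rintro rfl
      exact htail j
    simp only [ne_eq]
    omega
  refine ⟨fun u v => ∃ h : G.Adj u v, (f (Sum.inl ⟨s(u, v), h⟩)).1 = u, ?_, ?_, ?_, ?_⟩
  · rintro u v ⟨h, -⟩; exact h
  · intro u v h
    have h1 := htail (Sum.inl ⟨s(u, v), h⟩)
    simp only [ends, Sum.elim_inl, Sym2.mem_toFinset, Sym2.mem_iff] at h1
    refine h1.imp (fun h1 => ⟨h, h1⟩) (fun h1 => ⟨h.symm, ?_⟩)
    simpa only [Sym2.eq_swap] using h1
  · rintro u v ⟨h, h1⟩ ⟨h', h2⟩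
    simp only [Sym2.eq_swap (a := v)] at h2
    exact h.ne (h1.symm.trans h2)
  · intro u
    constructor
    · refine le_of_le_of_eq ?_ (hout u)
      rw [← Nat.card_coe_set_eq, ← Fintype.card_subtype, ← Nat.card_eq_fintype_card]
      refine Nat.card_le_card_of_injective
        (fun v => ⟨Sum.inl ⟨s(u, v.1), v.2.choose⟩, v.2.choose_spec⟩) ?_
      intro v w h
      have h' : v.1 = w.1 ∨ u = w.1 ∧ v.1 = u := by simpa [Subtype.ext_iff] using h
      exact Subtype.ext (h'.elim id fun h' => h'.2.trans h'.1)
    · refine le_of_le_of_eq ?_ (hin u)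
      rw [← Nat.card_coe_set_eq, ← Fintype.card_subtype, ← Nat.card_eq_fintype_card]
      refine Nat.card_le_card_of_injective
        (fun v => ⟨Sum.inl ⟨s(v.1, u), v.2.choose⟩, by simp [ends], ?_⟩) ?_
      · exact fun h => v.2.choose.ne (v.2.choose_spec.symm.trans h)
      · intro v w h
        have h' : v.1 = w.1 ∨ v.1 = u ∧ u = w.1 := by simpa [Subtype.ext_iff] using h
        exact Subtype.ext (h'.elim id fun h' => h'.1.trans h'.2)

open Finset in
/-- The defect form of Hall's theorem for a digraph with all in- and out-degrees at most `k` and at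
least `k s` arcs: it contains a matching (between tails and heads) with at least `s` arcs,
given by a set `U` of tails and an injective choice `g` of heads. -/
lemma exists_partial_injection {V : Type*} [Fintype V] [DecidableEq V] (D : V → V → Prop)
    [DecidableRel D] (k s : ℕ) (hk : 0 < k) (hs : s ≤ Fintype.card V)
    (hout : ∀ u, #{v | D u v} ≤ k) (hin : ∀ v, #{u | D u v} ≤ k)
    (harcs : k * s ≤ ∑ u, #{v | D u v}) :
    ∃ (U : Finset V) (g : V → V), s ≤ #U ∧ (∀ u ∈ U, D u (g u)) ∧ Set.InjOn g U := by
  obtain ⟨d, hd⟩ := Nat.exists_eq_add_of_le hs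
  -- `d` dummy heads, each adjacent to every tail, absorb the defect in Hall's condition.
  obtain ⟨f, hf, hft⟩ := (all_card_le_biUnion_card_iff_exists_injective
    (fun u => ({v | D u v} : Finset V).disjSum (univ : Finset (Fin d)))).1 (by
      intro X
      rcases X.eq_empty_or_nonempty with rfl | ⟨x, hx⟩
      · simp
      have h1 : X.biUnion (fun u => ({v | D u v} : Finset V).disjSum (univ : Finset (Fin d)))
          = (X.biUnion fun u => {v | D u v}).disjSum univ := by
        ext (a | b)
        · simp
        · simpa using ⟨x, hx⟩
      rw [h1, card_disjSum, card_univ, Fintype.card_fin]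
      set N := X.biUnion fun u => ({v | D u v} : Finset V) with hN
      have h2 : ∑ u ∈ X, #{v | D u v} ≤ #N * k := by
        have h3 : ∀ u ∈ X, #{v | D u v} = #(bipartiteAbove D N u) := by
          intro u hu
          congr 1
          ext v
          simp only [bipartiteAbove, mem_filter, mem_univ, true_and, hN, mem_biUnion]
          exact ⟨fun h => ⟨⟨u, hu, h⟩, h⟩, fun h => h.2⟩
        rw [sum_congr rfl h3, sum_card_bipartiteAbove_eq_sum_card_bipartiteBelow]
        refine sum_le_card_nsmul _ _ _ fun v _ => (card_le_card ?_).trans (hin v)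
        exact filter_subset_filter _ (subset_univ _)
      have h3 : ∑ u ∈ Xᶜ, #{v | D u v} ≤ #Xᶜ * k :=
        sum_le_card_nsmul _ _ _ fun u _ => hout u
      have h4 := sum_add_sum_compl X fun u => #{v | D u v}
      have h5 : #Xᶜ + #X = Fintype.card V := card_compl_add_card X
      have h6 : k * s ≤ k * (#N + #Xᶜ) := by nlinarith
      have h7 := Nat.le_of_mul_le_mul_left h6 hk
      omega)
  refine ⟨({u | ∃ v, f u = Sum.inl v} : Finset V), fun u => Sum.elim id (fun _ => u) (f u), ?_, ?_, ?_⟩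
  · have h1 : #({u | ¬ ∃ v, f u = Sum.inl v} : Finset V) ≤ #(univ : Finset (Fin d)) := by
      rw [← card_map (Function.Embedding.inr : Fin d ↪ V ⊕ Fin d)]
      refine card_le_card_of_injOn f ?_ hf.injOn
      intro u hu
      rcases h : f u with v | i
      · simp [h] at hu
      · simp
    have h2 := card_filter_add_card_filter_not (s := (univ : Finset V))
      (fun u => ∃ v, f u = Sum.inl v)
    rw [card_univ] at h2
    rw [card_univ, Fintype.card_fin] at h1
    omega
  · intro u hu
    obtain ⟨v, hv⟩ := (mem_filter.1 hu).2
    have := hft u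
    rw [hv] at this
    simpa [hv] using this
  · intro u hu w hw h
    obtain ⟨v, hv⟩ := (mem_filter.1 (mem_coe.1 hu)).2
    obtain ⟨v', hv'⟩ := (mem_filter.1 (mem_coe.1 hw)).2
    simp only [hv, hv', Sum.elim_inl, id] at h
    exact hf (by rw [hv, hv', h])

open Finset in
/-- The edges `u g(u)` of a matching of arcs of an orientation of `G` form disjoint directed paths
and cycles, so they are a `2`-independent set of the line graph, of the same cardinality. -/
lemma lineGraph_indep_of_partial_injection {V : Type*} [Fintype V] (G : SimpleGraph V)
    (D : V → V → Prop) (hD : ∀ u v, D u v → G.Adj u v) (hasymm : ∀ u v, D u v → ¬ D v u)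
    (U : Finset V) (g : V → V) (hg : ∀ u ∈ U, D u (g u)) (hinj : Set.InjOn g U) :
    ∃ T : Set G.edgeSet, G.lineGraph.IsPIndepSet 2 T ∧ T.ncard = #U := by
  classical
  let h : U → G.edgeSet := fun u => ⟨s(u.1, g u.1), hD _ _ (hg u.1 u.2)⟩
  have hh : Function.Injective h := by
    rintro ⟨u, hu⟩ ⟨w, hw⟩ huw
    rcases Sym2.eq_iff.1 (congrArg Subtype.val huw) with ⟨h1, -⟩ | ⟨h1, h2⟩
    · exact Subtype.ext h1
    · exfalso
      have h3 := hg u hu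
      have h4 := hg w hw
      rw [h2] at h3
      rw [← h1] at h4
      exact hasymm _ _ h3 h4
  refine ⟨Set.range h, ?_, ?_⟩
  · rintro _ ⟨⟨u, hu⟩, rfl⟩
    -- The only candidates are the arc entering `u` and the arc leaving `g u`.
    let A : Set U := {w | g w.1 = u}
    let B : Set U := {w | w.1 = g u}
    have hA : A.ncard ≤ 1 := by
      rw [Set.ncard_le_one]
      intro a ha b hb
      exact Subtype.ext (hinj a.2 b.2 (Eq.trans ha (Eq.symm hb)))
    have hB : B.ncard ≤ 1 := by
      rw [Set.ncard_le_one]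
      intro a ha b hb
      exact Subtype.ext (Eq.trans ha (Eq.symm hb))
    have hsub : Set.range h ∩ G.lineGraph.neighborSet (h ⟨u, hu⟩) ⊆ h '' (A ∪ B) := by
      rintro _ ⟨⟨⟨w, hw⟩, rfl⟩, hadj⟩
      refine ⟨⟨w, hw⟩, ?_, rfl⟩
      rw [SimpleGraph.mem_neighborSet, SimpleGraph.lineGraph_adj_iff_exists] at hadj
      obtain ⟨hne, x, hx1, hx2⟩ := hadj
      have hne' : u ≠ w := by
        rintro rfl
        exact hne rfl
      simp only [h, Sym2.mem_iff] at hx1 hx2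
      rcases hx1 with rfl | rfl
      · rcases hx2 with h1 | h1
        · exact absurd h1 hne'
        · exact Or.inl h1.symm
      · rcases hx2 with h1 | h1
        · exact Or.inr h1.symm
        · exact absurd (hinj hu hw h1) hne'
    calc _ ≤ (h '' (A ∪ B)).ncard := Set.ncard_le_ncard hsub
      _ ≤ (A ∪ B).ncard := Set.ncard_image_le
      _ ≤ A.ncard + B.ncard := Set.ncard_union_le _ _
      _ ≤ 2 := by omega
  · rw [← Set.image_univ, Set.ncard_image_of_injective _ hh, Set.ncard_univ]
    simp

/-- let `p ≥ 0`, `q ≥ 2`, and let `r` be odd with `r ≥ 3` and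
`16r ≥ 17(p + 1)`. If `G` is `r`-regular, then `α_p(G) ≤ α_q(L(G))`. -/
theorem valid_triple_large_odd_r {V : Type*} [Fintype V] (G : SimpleGraph V)
    (r p q : ℕ) (hq : 2 ≤ q) (hodd : Odd r) (hr : 3 ≤ r)
    (hbig : 17 * (p + 1) ≤ 16 * r) (hreg : G.IsRegularDeg r) :
    G.pIndepNum p ≤ (G.lineGraph).pIndepNum q := by
  classical
  have hdeg : ∀ v, G.degree v = r := by
    intro v
    rw [← hreg v, ← G.card_neighborSet_eq_degree, ← Nat.card_coe_set_eq, Nat.card_eq_fintype_card]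
  obtain ⟨k, rfl⟩ : ∃ k, r = 2 * k - 1 := by
    obtain ⟨t, rfl⟩ := hodd
    exact ⟨t + 1, by omega⟩
  obtain ⟨D, hDG, hGD, hasymm, hDk⟩ := exists_orientation G k
    (fun v => by have := hdeg v; omega)
  refine csSup_le ⟨0, ∅, by simp [SimpleGraph.IsPIndepSet], by simp⟩ ?_
  rintro _ ⟨S, hS, rfl⟩
  have hScard := pIndep_card_le G (2 * k - 1) p (by omega) hdeg S.toFinset (by
    intro v hv
    have := hS v (Set.mem_toFinset.1 hv)
    rw [Set.ncard_eq_toFinset_card'] at this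
    refine le_trans (Finset.card_le_card ?_) this
    intro w hw
    simpa using hw)
  rw [← Set.ncard_eq_toFinset_card'] at hScard
  have hcount : ∀ s : Set V, s.ncard = (Finset.univ.filter (· ∈ s)).card := by
    intro s
    rw [Set.ncard_eq_toFinset_card']
    congr 1
    ext
    simp
  have hout : ∀ u, (Finset.univ.filter fun v => D u v).card ≤ k := fun u => by
    simpa [hcount] using (hDk u).1
  have hin : ∀ v, (Finset.univ.filter fun u => D u v).card ≤ k := fun v => by
    simpa [hcount] using (hDk v).2
  -- Every degree is the sum of the out-degree and the in-degree, so there are `r n / 2` arcs.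
  have harcs : (2 * k - 1) * Fintype.card V
      ≤ 2 * ∑ u, (Finset.univ.filter fun v => D u v).card := by
    have h1 : ∑ u, (Finset.univ.filter fun v => D u v).card
        = ∑ v, (Finset.univ.filter fun u => D u v).card :=
      Finset.sum_card_bipartiteAbove_eq_sum_card_bipartiteBelow D
    have h2 : ∑ u : V, G.degree u ≤ ∑ u, ((Finset.univ.filter fun v => D u v).card
        + (Finset.univ.filter fun v => D v u).card) := by
      refine Finset.sum_le_sum fun u _ => ?_
      refine le_trans ?_ (Finset.card_union_le _ _)
      rw [← G.card_neighborFinset_eq_degree]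
      apply Finset.card_le_card
      intro v hv
      simpa using hGD u v (by simpa using hv)
    rw [Finset.sum_add_distrib, ← h1, Finset.sum_congr rfl (fun u _ => hdeg u)] at h2
    simp only [Finset.sum_const, Finset.card_univ, smul_eq_mul] at h2
    linarith [mul_comm (2 * k - 1) (Fintype.card V)]
  have hk2 : 2 * k - 1 + 1 = 2 * k := by omega
  rw [hk2] at hScard
  obtain ⟨U, g, hU, hg, hinj⟩ := exists_partial_injection D k S.ncard (by omega)
    (by simpa using Set.ncard_le_card S) hout hin (by nlinarith)
  obtain ⟨T, hT, hTc⟩ := lineGraph_indep_of_partial_injection G D hDG hasymm U g hg hinj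
  refine hU.trans (hTc ▸ ?_)
  refine le_csSup ⟨Nat.card G.edgeSet, ?_⟩ ⟨T, fun e he => (hT e he).trans hq, rfl⟩
  rintro _ ⟨T', -, rfl⟩
  exact Set.ncard_le_card T'
end

section
/- For all integers p, r with 1 ≤ p ≤ r, there exists an r-regular finite simple graph G such that α_p(G) > α_0(L(G)); that is, the p-independence number of G strictly exceeds the matching number of G. Hence (p, q, r) with p ≥ 1 and q = 0 is never a valid α-triple. -/
/-!
It suffices to treat `1`-independent sets, since these are `p`-independent for every `p ≥ 1`.
A matching of a graph on `n` vertices has at most `n / 2` edges (`pIndepNum_lineGraph_le`), so an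
`r`-regular graph with a `1`-independent set containing more than half of its vertices is enough.

Such a graph (`twinGraph r`) is obtained from two disjoint copies of the complete bipartite graph
`K_{r, r-1}` by joining corresponding vertices of the two sides of size `r` by a perfect matching.
Every vertex then has degree `r`. The `2r` vertices on the large sides induce a perfect matching,
so they form a `1`-independent set, while the graph has only `4r - 2` vertices.
-/

open SimpleGraph

/-- Two copies (indexed by `Bool`) of the complete bipartite graph with sides `Fin r` and
`Fin (r - 1)`, together with the perfect matching that joins `(false, inl i)` to `(true, inl i)`. -/
def twinGraph (r : ℕ) : SimpleGraph (Bool × (Fin r ⊕ Fin (r - 1))) where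
  Adj v w := match v, w with
    | (a, .inl i), (b, .inl j) => a ≠ b ∧ i = j
    | (a, .inl _), (b, .inr _) => a = b
    | (a, .inr _), (b, .inl _) => a = b
    | (_, .inr _), (_, .inr _) => False
  symm := ⟨by
    rintro ⟨a, i | i⟩ ⟨b, j | j⟩ h <;> simp_all [eq_comm]⟩
  loopless := ⟨by
    rintro ⟨a, i | i⟩ h <;> simp_all⟩

lemma twinGraph_neighborSet_inl (r : ℕ) (a : Bool) (i : Fin r) :
    (twinGraph r).neighborSet (a, .inl i) =
      insert (!a, .inl i) (Set.range fun j => (a, Sum.inr j)) := by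
  ext ⟨b, j | j⟩ <;> cases a <;> cases b <;>
    simp [twinGraph, SimpleGraph.mem_neighborSet, eq_comm]

lemma twinGraph_neighborSet_inr (r : ℕ) (a : Bool) (i : Fin (r - 1)) :
    (twinGraph r).neighborSet (a, .inr i) = Set.range fun j => (a, Sum.inl j) := by
  ext ⟨b, j | j⟩ <;> simp [twinGraph, SimpleGraph.mem_neighborSet]

lemma ncard_range_of_injective {α : Type*} {n : ℕ} {f : Fin n → α} (hf : Function.Injective f) :
    (Set.range f).ncard = n := by
  rw [← Set.image_univ, Set.ncard_image_of_injective _ hf, Set.ncard_univ, Nat.card_fin]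

lemma twinGraph_isRegularDeg (r : ℕ) (hr : 1 ≤ r) : (twinGraph r).IsRegularDeg r := by
  rintro ⟨a, i | i⟩
  · rw [twinGraph_neighborSet_inl, Set.ncard_insert_of_notMem (by simp),
      ncard_range_of_injective (fun _ _ h => by simpa using h)]
    omega
  · rw [twinGraph_neighborSet_inr, ncard_range_of_injective (fun _ _ h => by simpa using h)]

/-- The vertices of `twinGraph r` on the two sides of size `r`. -/
def twinSet (r : ℕ) : Set (Bool × (Fin r ⊕ Fin (r - 1))) :=
  Set.range fun x : Bool × Fin r => (x.1, Sum.inl x.2)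

lemma twinSet_ncard (r : ℕ) : (twinSet r).ncard = 2 * r := by
  rw [twinSet, ← Set.image_univ, Set.ncard_image_of_injective, Set.ncard_univ]
  · simp
  · rintro ⟨a, i⟩ ⟨b, j⟩ h
    simpa using h

lemma twinSet_isPIndepSet (r : ℕ) : (twinGraph r).IsPIndepSet 1 (twinSet r) := by
  rintro _ ⟨⟨a, i⟩, rfl⟩
  refine (Set.ncard_le_ncard (t := {(!a, Sum.inl i)}) ?_).trans (Set.ncard_singleton _).le
  rintro _ ⟨⟨⟨b, j⟩, rfl⟩, h⟩
  simpa [twinGraph_neighborSet_inl] using h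

/-- A matching covers two vertices per edge, so it has at most half as many edges as there are
vertices. -/
lemma pIndepNum_lineGraph_le {V : Type*} [Fintype V] (G : SimpleGraph V) :
    2 * G.lineGraph.pIndepNum 0 ≤ Fintype.card V := by
  classical
  suffices h : G.lineGraph.pIndepNum 0 ≤ Fintype.card V / 2 by omega
  refine csSup_le ⟨0, ∅, fun v hv => hv.elim, Set.ncard_empty _⟩ ?_
  rintro _ ⟨S, hS, rfl⟩
  have hdisj : Set.PairwiseDisjoint (S.toFinset : Set G.edgeSet)
      (fun e => (e : Sym2 V).toFinset) := by
    intro e he f hf hne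
    rw [Function.onFun, Finset.disjoint_left]
    intro x hxe hxf
    have h0 := Nat.le_zero.1 (hS e (by simpa using he))
    rw [Set.ncard_eq_zero] at h0
    have hmem : f ∈ S ∩ G.lineGraph.neighborSet e := by
      refine ⟨by simpa using hf, ?_⟩
      rw [SimpleGraph.mem_neighborSet, SimpleGraph.lineGraph_adj_iff_exists]
      exact ⟨hne, x, by simpa using hxe, by simpa using hxf⟩
    rw [h0] at hmem
    exact hmem
  have hcard := Finset.card_biUnion hdisj
  rw [Finset.sum_congr rfl fun e _ => Sym2.card_toFinset_of_not_isDiag _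
    (G.not_isDiag_of_mem_edgeSet e.2), Finset.sum_const, smul_eq_mul,
    ← Set.ncard_eq_toFinset_card'] at hcard
  have := Finset.card_le_univ (S.toFinset.biUnion fun e => (e : Sym2 V).toFinset)
  omega

lemma IsPIndepSet.ncard_le_pIndepNum {V : Type*} [Finite V] {G : SimpleGraph V} {p : ℕ}
    {S : Set V} (hS : G.IsPIndepSet p S) : S.ncard ≤ G.pIndepNum p := by
  refine le_csSup ⟨Nat.card V, ?_⟩ ⟨S, hS, rfl⟩
  rintro _ ⟨T, -, rfl⟩
  exact Set.ncard_le_card T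

/-- for all `1 ≤ p ≤ r` there is an `r`-regular graph `G` with
`α_p(G) > α₀(L(G))`; i.e. `(p, 0, r)` with `p ≥ 1` is never a valid α-triple. -/
theorem not_valid_triple_q_zero (p r : ℕ) (hp : 1 ≤ p) (hpr : p ≤ r) :
    ∃ (n : ℕ) (G : SimpleGraph (Fin n)),
      G.IsRegularDeg r ∧ (G.lineGraph).pIndepNum 0 < G.pIndepNum p := by
  let e := Fintype.equivFin (Bool × (Fin r ⊕ Fin (r - 1)))
  have hpre : ∀ T : Set (Bool × (Fin r ⊕ Fin (r - 1))), (e.symm ⁻¹' T).ncard = T.ncard :=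
    fun T => Set.ncard_preimage_of_injective_subset_range e.symm.injective (by simp)
  refine ⟨_, (twinGraph r).comap e.symm, fun v => ?_, ?_⟩
  · exact (hpre _).trans (twinGraph_isRegularDeg r (hp.trans hpr) (e.symm v))
  · have hS : ((twinGraph r).comap e.symm).IsPIndepSet p (e.symm ⁻¹' twinSet r) := fun v hv =>
      ((hpre (twinSet r ∩ (twinGraph r).neighborSet (e.symm v))).trans_le
        (twinSet_isPIndepSet r _ hv)).trans hp
    have h1 := IsPIndepSet.ncard_le_pIndepNum hS
    rw [hpre, twinSet_ncard] at h1
    have h2 := pIndepNum_lineGraph_le ((twinGraph r).comap e.symm)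
    simp only [Fintype.card_fin, Fintype.card_prod, Fintype.card_bool, Fintype.card_sum] at h2
    omega
end

section
/- For all integers p ≥ 1 and r ≥ 1 with r < 2p, there exists an r-regular finite simple graph G such that α_p(G) > α_1(L(G)). Hence (p, q = 1, r) with r < 2p is never a valid α-triple. -/
/-!
A `1`-independent set `M` of `L(G)` is a set of edges of `G` whose components are paths with one
or two edges. Giving each edge the weight `1 / deg_M a + 1 / deg_M b`, where `a`, `b` are its ends,
one gets at least `3 / 2` per edge and at most `|V|` in total, so `3 α₁(L(G)) ≤ 2 |V|`
(`three_mul_pIndepNum_lineGraph_le`).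

It remains to find an `r`-regular graph with `α_p(G) > 2 |V| / 3`. Since a `min p r`-independent
set is `p`-independent, one may assume `p ≤ r < 2p`. Take a `p`-regular bipartite circulant graph on
`2r` vertices and join each of its two sides completely to its own set of `r - p` new vertices
(`joinGraph`). The result is `r`-regular on `4r - 2p` vertices, and the `2r` original vertices form
a `p`-independent set; finally `2 (4r - 2p) < 3 (2r)` because `r < 2p`.
-/

open SimpleGraph

namespace NotValidTriple

/-- If every edge in a set `M` of loopless edges meets at most one other member of `M`, then
`3 |M| ≤ 2 |V|`. Here `I v` is the set of members of `M` at `v`, and each incidence `v ∈ e` has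
weight `1 / |I v|`, so that every vertex carries total weight at most `1`. -/
lemma three_mul_card_le {V : Type*} [Fintype V] [DecidableEq V] (M : Finset (Sym2 V))
    (hd : ∀ e ∈ M, ¬ e.IsDiag)
    (hM : ∀ e ∈ M, (M.filter (fun f => f ≠ e ∧ ∃ v, v ∈ e ∧ v ∈ f)).card ≤ 1) :
    3 * M.card ≤ 2 * Fintype.card V := by
  let I : V → Finset (Sym2 V) := fun v => M.filter (fun e => v ∈ e)
  have h1 : ∀ e ∈ M, (3 / 2 : ℚ) ≤ ∑ v : V, if v ∈ e then (1 / (I v).card : ℚ) else 0 := by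
    intro e he
    induction e with | _ a b =>
    have hab : a ≠ b := by simpa using hd _ he
    have hsum : (∑ v : V, if v ∈ s(a, b) then (1 / (I v).card : ℚ) else 0)
        = 1 / (I a).card + 1 / (I b).card := by
      rw [← Finset.sum_filter]
      have : Finset.univ.filter (fun v => v ∈ s(a, b)) = {a, b} := by ext; simp
      rw [this, Finset.sum_pair hab]
    rw [hsum]
    have hinter : I a ∩ I b = {s(a, b)} := by
      ext f
      simp only [I, Finset.mem_inter, Finset.mem_filter, Finset.mem_singleton]
      constructor
      · rintro ⟨⟨_, ha⟩, _, hb⟩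
        exact (Sym2.mem_and_mem_iff hab).1 ⟨ha, hb⟩
      · rintro rfl
        simp [he]
    -- The ends of an edge `e` of `M` have degree sum at most `3` in `M`: `e` is counted twice, and
    -- the single edge possibly meeting `e` is counted once.
    have hunion : I a ∪ I b ⊆
        insert s(a, b) (M.filter (fun f => f ≠ s(a, b) ∧ ∃ v, v ∈ s(a, b) ∧ v ∈ f)) := by
      intro f hf
      simp only [I, Finset.mem_union, Finset.mem_filter, Finset.mem_insert] at hf ⊢
      by_cases hfe : f = s(a, b)
      · exact Or.inl hfe
      · rcases hf with ⟨hm, h⟩ | ⟨hm, h⟩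
        · exact Or.inr ⟨hm, hfe, a, by simp, h⟩
        · exact Or.inr ⟨hm, hfe, b, by simp, h⟩
    have hc := (Finset.card_le_card hunion).trans (Finset.card_insert_le _ _)
    have hc' := hM _ he
    have hadd := Finset.card_union_add_card_inter (I a) (I b)
    rw [hinter, Finset.card_singleton] at hadd
    have ha : 0 < (I a).card := Finset.card_pos.2 ⟨s(a, b), by simp [I, he]⟩
    have hb : 0 < (I b).card := Finset.card_pos.2 ⟨s(a, b), by simp [I, he]⟩
    have hle : (I a).card + (I b).card ≤ 3 := by omega
    generalize (I a).card = m at *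
    generalize (I b).card = n at *
    have hm : m ≤ 2 := by omega
    have hn : n ≤ 2 := by omega
    interval_cases m <;> interval_cases n <;> first | omega | norm_num
  have h2 : ∀ v : V, (∑ e ∈ M, if v ∈ e then (1 / (I v).card : ℚ) else 0) ≤ 1 := by
    intro v
    rw [← Finset.sum_filter, Finset.sum_const, nsmul_eq_mul, mul_one_div]
    exact div_self_le_one _
  have h3 : (M.card : ℚ) * (3 / 2) ≤ Fintype.card V := by
    calc (M.card : ℚ) * (3 / 2) = ∑ e ∈ M, (3 / 2 : ℚ) := by simp
      _ ≤ ∑ e ∈ M, ∑ v : V, if v ∈ e then (1 / (I v).card : ℚ) else 0 := Finset.sum_le_sum h1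
      _ = ∑ v : V, ∑ e ∈ M, if v ∈ e then (1 / (I v).card : ℚ) else 0 := Finset.sum_comm
      _ ≤ ∑ v : V, (1 : ℚ) := Finset.sum_le_sum fun v _ => h2 v
      _ = Fintype.card V := by simp
  have h4 : (3 * M.card : ℚ) ≤ 2 * Fintype.card V := by linarith
  exact_mod_cast h4

lemma three_mul_pIndepNum_lineGraph_le {V : Type*} [Fintype V] (G : SimpleGraph V) :
    3 * G.lineGraph.pIndepNum 1 ≤ 2 * Fintype.card V := by
  classical
  suffices h : G.lineGraph.pIndepNum 1 ≤ 2 * Fintype.card V / 3 by omega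
  refine csSup_le ⟨0, ∅, fun v hv => hv.elim, by simp⟩ ?_
  rintro _ ⟨S, hS, rfl⟩
  set M : Finset (Sym2 V) := S.toFinset.map (Function.Embedding.subtype _) with hMdef
  have hcard : M.card = S.ncard := by
    rw [Finset.card_map, Set.ncard_eq_toFinset_card']
  have := three_mul_card_le M ?_ ?_
  · omega
  · intro e he
    simp only [hMdef, Finset.mem_map, Function.Embedding.subtype_apply] at he
    obtain ⟨e, -, rfl⟩ := he
    exact G.not_isDiag_of_mem_edgeSet e.2
  · intro e he
    simp only [hMdef, Finset.mem_map, Function.Embedding.subtype_apply, Set.mem_toFinset] at he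
    obtain ⟨e, he, rfl⟩ := he
    refine le_trans ?_ (hS e he)
    rw [Set.ncard_eq_toFinset_card', ← Finset.card_map (Function.Embedding.subtype _)]
    refine Finset.card_le_card fun f hf => ?_
    simp only [hMdef, Finset.mem_filter, Finset.mem_map, Function.Embedding.subtype_apply,
      Set.mem_toFinset] at hf ⊢
    obtain ⟨⟨f, hfS, rfl⟩, hne, v, hve, hvf⟩ := hf
    refine ⟨f, ⟨hfS, ?_⟩, rfl⟩
    rw [SimpleGraph.mem_neighborSet, SimpleGraph.lineGraph_adj_iff_exists]
    exact ⟨fun h => hne (by rw [h]), v, hve, hvf⟩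

lemma IsPIndepSet.ncard_le_pIndepNum {V : Type*} [Finite V] {G : SimpleGraph V} {p : ℕ}
    {S : Set V} (hS : G.IsPIndepSet p S) : S.ncard ≤ G.pIndepNum p := by
  refine le_csSup ⟨Nat.card V, ?_⟩ ⟨S, hS, rfl⟩
  rintro _ ⟨T, -, rfl⟩
  exact Set.ncard_le_card T

/-- The vertices `inl (x, i)` carry a `p`-regular (when `p ≤ r`) bipartite graph with sides indexed
by `i : Bool`: `x` and `y` on opposite sides are adjacent when the residue of `x + y` is below `p`
(using the sum makes the relation symmetric). The vertices `inr (t, i)`, with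
`d` values of `t` for each `i`, are independent, each joined to the whole side `i`. -/
def joinGraph (p r d : ℕ) : SimpleGraph (ZMod r × Bool ⊕ Fin d × Bool) where
  Adj
    | .inl (x, i), .inl (y, j) => i ≠ j ∧ (x + y).val < p
    | .inl (_, i), .inr (_, j) => i = j
    | .inr (_, i), .inl (_, j) => i = j
    | .inr _, .inr _ => False
  symm := ⟨by
    rintro (⟨x, i⟩ | ⟨x, i⟩) (⟨y, j⟩ | ⟨y, j⟩) h
    · exact ⟨h.1.symm, by rw [add_comm]; exact h.2⟩
    · exact Eq.symm h
    · exact Eq.symm h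
    · exact h⟩
  loopless := ⟨by
    rintro (⟨x, i⟩ | ⟨x, i⟩) h
    · exact h.1 rfl
    · exact h⟩

lemma ncard_val_lt (p r : ℕ) [NeZero r] (h : p ≤ r) : {z : ZMod r | z.val < p}.ncard = p := by
  have : {z : ZMod r | z.val < p} = (fun k : ℕ => (k : ZMod r)) '' (Set.Iio p) := by
    ext z
    constructor
    · intro hz
      exact ⟨z.val, hz, ZMod.natCast_zmod_val z⟩
    · rintro ⟨k, hk, rfl⟩
      have hk : k < p := hk
      simpa [ZMod.val_natCast_of_lt (hk.trans_le h)] using hk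
  rw [this, Set.InjOn.ncard_image]
  · simp [Set.ncard_eq_toFinset_card']
  · intro a ha b hb hab
    have := congrArg ZMod.val hab
    simpa [ZMod.val_natCast_of_lt (lt_of_lt_of_le ha h),
      ZMod.val_natCast_of_lt (lt_of_lt_of_le hb h)] using this

lemma ncard_neighbors_inl (p r d : ℕ) [NeZero r] (h : p ≤ r) (x : ZMod r) (i : Bool) :
    (Set.range Sum.inl ∩ (joinGraph p r d).neighborSet (.inl (x, i))).ncard = p := by
  have : Set.range Sum.inl ∩ (joinGraph p r d).neighborSet (.inl (x, i))
      = (fun z => Sum.inl (z - x, !i)) '' {z : ZMod r | z.val < p} := by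
    ext w
    constructor
    · rintro ⟨⟨⟨y, j⟩, rfl⟩, hij, hlt⟩
      refine ⟨x + y, hlt, ?_⟩
      simp only [Sum.inl.injEq, Prod.mk.injEq, add_sub_cancel_left, true_and]
      revert hij; cases i <;> cases j <;> simp
    · rintro ⟨z, hz, rfl⟩
      refine ⟨⟨_, rfl⟩, ?_, ?_⟩
      · cases i <;> simp
      · simpa using hz
  rw [this, Set.ncard_image_of_injective, ncard_val_lt p r h]
  intro a b hab
  simpa using hab

lemma joinGraph_isRegularDeg (p r : ℕ) [NeZero r] (h : p ≤ r) :
    (joinGraph p r (r - p)).IsRegularDeg r := by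
  rintro (⟨x, i⟩ | ⟨t, i⟩)
  · have hsplit : (joinGraph p r (r - p)).neighborSet (.inl (x, i))
        = (Set.range Sum.inl ∩ (joinGraph p r (r - p)).neighborSet (.inl (x, i)))
          ∪ Set.range (fun t : Fin (r - p) => Sum.inr (t, i)) := by
      ext (⟨y, j⟩ | ⟨s, j⟩)
      · simp
      · simp only [SimpleGraph.mem_neighborSet, Set.mem_union, Set.mem_inter_iff, Set.mem_range]
        constructor
        · intro hij
          have hij : i = j := hij
          exact Or.inr ⟨s, by rw [hij]⟩
        · rintro (⟨⟨_, h⟩, -⟩ | ⟨_, h⟩)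
          · cases h
          · cases h
            exact rfl
    rw [hsplit, Set.ncard_union_eq, ncard_neighbors_inl p r _ h, Set.ncard_range_of_injective]
    · simp; omega
    · intro a b hab
      simpa using hab
    · rw [Set.disjoint_left]
      rintro _ ⟨⟨_, rfl⟩, -⟩ ⟨_, h⟩
      cases h
  · have hrange : (joinGraph p r (r - p)).neighborSet (.inr (t, i))
        = Set.range (fun x : ZMod r => Sum.inl (x, i)) := by
      ext (⟨y, j⟩ | ⟨s, j⟩)
      · simp [joinGraph]
      · simp [joinGraph]
    rw [hrange, Set.ncard_range_of_injective]
    · simp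
    · intro a b hab
      simpa using hab

lemma two_mul_le_pIndepNum_joinGraph (p q r d : ℕ) [NeZero r] (h : p ≤ r) (hpq : p ≤ q) :
    2 * r ≤ (joinGraph p r d).pIndepNum q := by
  have hS : (joinGraph p r d).IsPIndepSet q (Set.range Sum.inl) := by
    rintro _ ⟨⟨x, i⟩, rfl⟩
    rw [ncard_neighbors_inl p r d h]
    exact hpq
  have := IsPIndepSet.ncard_le_pIndepNum hS
  rw [Set.ncard_range_of_injective Sum.inl_injective] at this
  rw [Nat.card_prod, Nat.card_zmod, Nat.card_eq_fintype_card (α := Bool), Fintype.card_bool] at this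
  omega

lemma isRegularDeg_of_iso {V W : Type*} {G : SimpleGraph V} {H : SimpleGraph W} (e : G ≃g H)
    {r : ℕ} (h : G.IsRegularDeg r) : H.IsRegularDeg r := by
  intro w
  rw [← h (e.symm w), ← Nat.card_coe_set_eq, ← Nat.card_coe_set_eq]
  exact Nat.card_congr (e.symm.mapNeighborSet w)

lemma pIndepNum_le_of_iso {V W : Type*} [Finite W] {G : SimpleGraph V} {H : SimpleGraph W}
    (e : G ≃g H) (p : ℕ) : G.pIndepNum p ≤ H.pIndepNum p := by
  refine csSup_le ⟨0, ∅, fun v hv => hv.elim, by simp⟩ ?_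
  rintro _ ⟨S, hS, rfl⟩
  rw [← Set.ncard_image_of_injective S e.injective]
  refine IsPIndepSet.ncard_le_pIndepNum ?_
  rintro _ ⟨v, hv, rfl⟩
  have : e '' S ∩ H.neighborSet (e v) = e '' (S ∩ G.neighborSet v) := by
    ext w
    constructor
    · rintro ⟨⟨u, hu, rfl⟩, hadj⟩
      exact ⟨u, ⟨hu, e.map_adj_iff.1 hadj⟩, rfl⟩
    · rintro ⟨u, ⟨hu, hadj⟩, rfl⟩
      exact ⟨⟨u, hu, rfl⟩, e.map_adj_iff.2 hadj⟩
  rw [this, Set.ncard_image_of_injective _ e.injective]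
  exact hS v hv

end NotValidTriple

/-- for all `p ≥ 1` and `r ≥ 1` with `r < 2p` there is an `r`-regular graph
`G` with `α_p(G) > α₁(L(G))`; i.e. `(p, 1, r)` with `r < 2p` is never a valid α-triple. -/
theorem not_valid_triple_q_one (p r : ℕ) (hp : 1 ≤ p) (hr : 1 ≤ r) (hrp : r < 2 * p) :
    ∃ (n : ℕ) (G : SimpleGraph (Fin n)),
      G.IsRegularDeg r ∧ (G.lineGraph).pIndepNum 1 < G.pIndepNum p := by
  have : NeZero r := ⟨by omega⟩
  -- For `r ≤ p` the graph below is `K_{r,r}`, since then `min p r = r`.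
  set m := min p r with hm
  have hmr : m ≤ r := min_le_right _ _
  set G := NotValidTriple.joinGraph m r (r - m)
  have hcard : Fintype.card (ZMod r × Bool ⊕ Fin (r - m) × Bool) = 2 * r + 2 * (r - m) := by
    simp [ZMod.card]
    ring
  refine ⟨_, G.overFin rfl, NotValidTriple.isRegularDeg_of_iso (G.overFinIso rfl)
    (NotValidTriple.joinGraph_isRegularDeg m r hmr), ?_⟩
  have hupper := NotValidTriple.three_mul_pIndepNum_lineGraph_le (G.overFin rfl)
  rw [Fintype.card_fin] at hupper
  have hlower := (NotValidTriple.two_mul_le_pIndepNum_joinGraph m p r (r - m) hmr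
    (min_le_left _ _)).trans (NotValidTriple.pIndepNum_le_of_iso (G.overFinIso rfl) p)
  omega
end

section
/- Let r ≥ 3 be an odd integer and let G be an r-regular finite simple graph of order n whose edge set is the union of (r+1)/2 linear forests (spanning subgraphs that are acyclic with maximum degree at most 2). Then α_2(L(G))·(r+1) ≥ r·n, and consequently α_p(G) ≤ α_q(L(G)) for all integers p with 0 ≤ p ≤ r - 1 and all q ≥ 2. -/
/-!
A subgraph `H ≤ G` of maximum degree at most `2` has an edge set that is `2`-independent in `L(G)`:
at each end of an edge of `H` there is at most one further edge of `H`
(`isPIndepSet_lineGraph_of_degree_le_two`). As `(r + 1) / 2` such subgraphs cover the `r * n / 2`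
edges of `G`, one of them has at least `r * n / (r + 1)` edges, which is the first claim.

Conversely, if `S` is `p`-independent with `p ≤ r - 1`, each vertex of `S` has a neighbor outside
`S`, and each vertex outside `S` has only `r` neighbors, so `|S| ≤ r * (n - |S|)`, that is,
`|S| * (r + 1) ≤ r * n` (`IsPIndepSet.ncard_mul_le`). Comparing the two bounds, and using that
`α_q` increases with `q`, gives the second claim. Acyclicity plays no role: coverings by graphs
of maximum degree at most `2` suffice.
-/


open SimpleGraph

namespace SimpleGraph

variable {V : Type*}

lemma IsPIndepSet.ncard_le_pIndepNum [Finite V] {G : SimpleGraph V} {p : ℕ} {S : Set V}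
    (hS : G.IsPIndepSet p S) : S.ncard ≤ G.pIndepNum p := by
  refine le_csSup ⟨Nat.card V, ?_⟩ ⟨S, hS, rfl⟩
  rintro _ ⟨T, -, rfl⟩
  exact Set.ncard_le_card T

lemma pIndepNum_le {G : SimpleGraph V} {p m : ℕ}
    (h : ∀ S, G.IsPIndepSet p S → S.ncard ≤ m) : G.pIndepNum p ≤ m := by
  refine csSup_le' ?_
  rintro _ ⟨S, hS, rfl⟩
  exact h S hS

lemma pIndepNum_mono [Finite V] (G : SimpleGraph V) {p q : ℕ} (h : p ≤ q) :
    G.pIndepNum p ≤ G.pIndepNum q :=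
  pIndepNum_le fun _ hS => IsPIndepSet.ncard_le_pIndepNum fun v hv => (hS v hv).trans h

lemma isPIndepSet_lineGraph_of_degree_le_two [Finite V] {G H : SimpleGraph V}
    (hdeg : ∀ v, (H.neighborSet v).ncard ≤ 2) :
    G.lineGraph.IsPIndepSet 2 {e : G.edgeSet | e.1 ∈ H.edgeSet} := by
  rintro ⟨e, heG⟩ he
  induction e with | _ u v
  have huv : H.Adj u v := he
  have key : ∀ x y, H.Adj x y → ((fun z => s(x, z)) '' (H.neighborSet x \ {y})).ncard ≤ 1 := by
    intro x y hxy
    refine (Set.ncard_image_le (Set.toFinite _)).trans ?_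
    have h1 := Set.ncard_sdiff_singleton_of_mem (s := H.neighborSet x) (a := y) hxy
    have h2 := hdeg x
    omega
  rw [← Set.ncard_image_of_injective _ Subtype.val_injective]
  calc _ ≤ ((fun z => s(u, z)) '' (H.neighborSet u \ {v}) ∪
        (fun z => s(v, z)) '' (H.neighborSet v \ {u})).ncard := by
        refine Set.ncard_le_ncard ?_ (Set.toFinite _)
        rintro _ ⟨⟨f, hfG⟩, ⟨hfH, hadj⟩, rfl⟩
        rw [mem_neighborSet, lineGraph_adj_iff_exists] at hadj
        obtain ⟨hne, x, hxe, hxf⟩ := hadj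
        obtain ⟨z, rfl⟩ := Sym2.mem_iff_exists.mp hxf
        have hxz : H.Adj x z := hfH
        rcases Sym2.mem_iff.mp hxe with rfl | rfl
        · refine Or.inl ⟨z, ⟨hxz, ?_⟩, rfl⟩
          rintro rfl
          exact hne rfl
        · refine Or.inr ⟨z, ⟨hxz, ?_⟩, rfl⟩
          rintro rfl
          exact hne (Subtype.ext Sym2.eq_swap)
    _ ≤ 1 + 1 := (Set.ncard_union_le _ _).trans
        (Nat.add_le_add (key u v huv) (key v u huv.symm))

lemma ncard_edgeSet_le_pIndepNum_lineGraph [Finite V] {G H : SimpleGraph V} (hHG : H ≤ G)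
    (hdeg : ∀ v, (H.neighborSet v).ncard ≤ 2) :
    H.edgeSet.ncard ≤ G.lineGraph.pIndepNum 2 := by
  refine le_trans (le_of_eq ?_)
    (isPIndepSet_lineGraph_of_degree_le_two (G := G) hdeg).ncard_le_pIndepNum
  rw [← Set.ncard_image_of_injective _ Subtype.val_injective]
  congr 1
  ext e
  constructor
  · exact fun he => ⟨⟨e, edgeSet_mono hHG he⟩, he, rfl⟩
  · rintro ⟨f, hf, rfl⟩
    exact hf

lemma IsRegularDeg.mul_card_eq [Fintype V] {G : SimpleGraph V} {r : ℕ} (h : G.IsRegularDeg r) :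
    r * Fintype.card V = 2 * G.edgeSet.ncard := by
  classical
  have hd : ∀ v, G.degree v = r := fun v => by
    rw [← h v, ← card_neighborSet_eq_degree, Set.ncard_eq_toFinset_card', Set.toFinset_card]
  have hs := G.sum_degrees_eq_twice_card_edges
  simp only [hd, Finset.sum_const, Finset.card_univ, smul_eq_mul] at hs
  rw [Set.ncard_eq_toFinset_card', mul_comm]
  exact hs

/-- Double counting of the pairs formed by a vertex of `S` and a neighbor of it outside `S`. -/
lemma IsPIndepSet.ncard_mul_le_s19 [Fintype V] {G : SimpleGraph V} {p r : ℕ} {S : Set V}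
    (h : G.IsRegularDeg r) (hp : p < r) (hS : G.IsPIndepSet p S) :
    S.ncard * (r + 1) ≤ r * Fintype.card V := by
  classical
  have hout : ∀ v ∈ S, ∃ w, w ∉ S ∧ G.Adj v w := by
    intro v hv
    by_contra! hc
    have hsub : G.neighborSet v ⊆ S := fun w hw => by
      by_contra hwS
      exact hc w hwS hw
    have h1 := hS v hv
    rw [Set.inter_eq_right.mpr hsub, h v] at h1
    omega
  have hle : S.toFinset.card ≤ Sᶜ.toFinset.card * r := by
    refine le_trans (Finset.card_le_card (t := Sᶜ.toFinset.biUnion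
      fun w => (G.neighborSet w).toFinset) ?_) (Finset.card_biUnion_le_card_mul _ _ _ ?_)
    · intro v hv
      obtain ⟨w, hw, hvw⟩ := hout v (Set.mem_toFinset.mp hv)
      exact Finset.mem_biUnion.mpr ⟨w, by simpa using hw, by simpa using hvw.symm⟩
    · intro w _
      rw [← Set.ncard_eq_toFinset_card', h w]
  rw [← Set.ncard_eq_toFinset_card', ← Set.ncard_eq_toFinset_card'] at hle
  have hsum := Set.ncard_add_ncard_compl S
  rw [Nat.card_eq_fintype_card] at hsum
  rw [← hsum]
  nlinarith

end SimpleGraph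

/-- let `r ≥ 3` be odd and let `G` be an `r`-regular graph of order `n`
whose edge set is the union of `(r+1)/2` linear forests (spanning subgraphs that are
acyclic with maximum degree at most 2). Then `α₂(L(G)) · (r + 1) ≥ r · n`, and
consequently `α_p(G) ≤ α_q(L(G))` for all `0 ≤ p ≤ r - 1` and `q ≥ 2`. -/
theorem valid_triple_of_linear_arboricity {V : Type*} [Fintype V] (G : SimpleGraph V)
    (r : ℕ) (hr : 3 ≤ r) (hodd : Odd r) (hreg : G.IsRegularDeg r)
    (F : Fin ((r + 1) / 2) → SimpleGraph V)
    (hFG : ∀ i, F i ≤ G)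
    (hacyclic : ∀ i, (F i).IsAcyclic)
    (hmaxdeg : ∀ i, ∀ v : V, ((F i).neighborSet v).ncard ≤ 2)
    (hcover : ∀ u v : V, G.Adj u v → ∃ i, (F i).Adj u v) :
    r * Fintype.card V ≤ (G.lineGraph).pIndepNum 2 * (r + 1) ∧
    ∀ p q : ℕ, p ≤ r - 1 → 2 ≤ q →
      G.pIndepNum p ≤ (G.lineGraph).pIndepNum q := by
  have h1 : r * Fintype.card V ≤ (G.lineGraph).pIndepNum 2 * (r + 1) := by
    classical
    have hc : G.edgeSet.ncard ≤ (r + 1) / 2 * (G.lineGraph).pIndepNum 2 := by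
      have hsub : G.edgeSet.toFinset ⊆
          Finset.univ.biUnion fun i => (F i).edgeSet.toFinset := by
        intro e he
        rw [Set.mem_toFinset] at he
        induction e with | _ u v
        obtain ⟨i, hi⟩ := hcover u v he
        exact Finset.mem_biUnion.mpr ⟨i, Finset.mem_univ _, Set.mem_toFinset.mpr hi⟩
      have hb := (Finset.card_le_card hsub).trans
        (Finset.card_biUnion_le_card_mul _ _ ((G.lineGraph).pIndepNum 2) fun i _ => by
          rw [← Set.ncard_eq_toFinset_card']
          exact ncard_edgeSet_le_pIndepNum_lineGraph (hFG i) (hmaxdeg i))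
      rwa [← Set.ncard_eq_toFinset_card', Finset.card_univ, Fintype.card_fin] at hb
    -- Oddness of `r` makes the division in `(r + 1) / 2` exact.
    obtain ⟨k, rfl⟩ := hodd
    have hk : (2 * k + 1 + 1) / 2 = k + 1 := by omega
    rw [hk] at hc
    rw [hreg.mul_card_eq]
    nlinarith
  refine ⟨h1, fun p q hp hq => pIndepNum_le fun S hS => ?_⟩
  have h2 := hS.ncard_mul_le_s19 hreg (by omega)
  exact (Nat.le_of_mul_le_mul_right (h2.trans h1) (Nat.succ_pos r)).trans (pIndepNum_mono _ hq)
end
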